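/- arXiv:2512.12446 — 5 statements merged into one kernel-verified Lean document; each statement's English description precedes it below -/
import Mathlib

section
/- Let n ≥ 3 be a finite natural number and let 𝔄 = ⟨A, +, −, c_Γ, s_σ⟩_{Γ⊆Fin n, σ∈T_n} be a polyadic-type algebra of dimension n. Then 𝔄 is isomorphic to a subalgebra of a direct product of full polyadic set algebras (without diagonals) if and only if the reduct ⟨A, +, −, c_Γ⟩_{Γ⊆Fin n} is isomorphic to a subalgebra of a direct product of algebras ⟨𝒫(^nU), ∪, complement, C_Γ⟩_{Γ⊆Fin n} and the following equations hold in 𝔄 for all Γ ⊆ Fin n and all σ, τ ∈ T_n: (1) s_σ(x + y) = s_σ x + s_σ y and s_σ(−x) = −s_σ x; (2) s_{σ∘τ} x = s_σ(s_τ x) and s_{id} x = x; (3) s_σ c_Γ x = s_τ c_Γ x whenever σ(i) = τ(i) for all i ∉ Γ; (4) c_Γ s_σ x = s_σ c_{σ⁻¹Γ} x whenever σ is injective on σ⁻¹Γ, where σ⁻¹Γ = {i : σ(i) ∈ Γ}. -/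
/-- Cylindrification along a set of coordinates `Γ`:
`C_Γ(R) = {s : ∃ z ∈ R, s i = z i for all i ∉ Γ}`. -/
def cylG {n : ℕ} {U : Type} (Γ : Set (Fin n)) (R : Set (Fin n → U)) : Set (Fin n → U) :=
  {s | ∃ z ∈ R, ∀ i ∉ Γ, s i = z i}

/-- Substitution along a transformation `σ`: `S_σ(R) = {s : s ∘ σ ∈ R}`. -/
def subG {n : ℕ} {U : Type} (σ : Fin n → Fin n) (R : Set (Fin n → U)) : Set (Fin n → U) :=
  {s | s ∘ σ ∈ R}

/-- `𝔄 = ⟨A, +, −, c_Γ, s_σ⟩` is isomorphic to a subalgebra of a direct product of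
full polyadic set algebras (without diagonals). -/
def RepPoly {n : ℕ} {A : Type} [BooleanAlgebra A]
    (c : Set (Fin n) → A → A) (s : (Fin n → Fin n) → A → A) : Prop :=
  ∃ (ι : Type) (U : ι → Type) (f : A → ∀ k, Set (Fin n → U k)),
    Function.Injective f ∧
    (∀ x y : A, f (x ⊔ y) = f x ⊔ f y) ∧
    (∀ x : A, f xᶜ = (f x)ᶜ) ∧
    (∀ (Γ : Set (Fin n)) (x : A) (k : ι), f (c Γ x) k = cylG Γ (f x k)) ∧
    (∀ (σ : Fin n → Fin n) (x : A) (k : ι), f (s σ x) k = subG σ (f x k))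

/-- The reduct `⟨A, +, −, c_Γ⟩` is isomorphic to a subalgebra of a direct product
of algebras `⟨𝒫(ⁿU), ∪, ᶜ, C_Γ⟩`. -/
def RepDf {n : ℕ} {A : Type} [BooleanAlgebra A]
    (c : Set (Fin n) → A → A) : Prop :=
  ∃ (ι : Type) (U : ι → Type) (f : A → ∀ k, Set (Fin n → U k)),
    Function.Injective f ∧
    (∀ x y : A, f (x ⊔ y) = f x ⊔ f y) ∧
    (∀ x : A, f xᶜ = (f x)ᶜ) ∧
    (∀ (Γ : Set (Fin n)) (x : A) (k : ι), f (c Γ x) k = cylG Γ (f x k))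

section Axioms

open Function

variable {n : ℕ} {A : Type} [BooleanAlgebra A]

/-- The equations (1)–(4) for substitutions, together with the few laws of the cylindrifications
that hold in every algebra whose diagonal-free reduct is representable. -/
structure PolyAxioms (c : Set (Fin n) → A → A) (s : (Fin n → Fin n) → A → A) : Prop where
  s_sup : ∀ (σ : Fin n → Fin n) (x y : A), s σ (x ⊔ y) = s σ x ⊔ s σ y
  s_compl : ∀ (σ : Fin n → Fin n) (x : A), s σ xᶜ = (s σ x)ᶜ
  s_comp : ∀ (σ τ : Fin n → Fin n) (x : A), s (σ ∘ τ) x = s σ (s τ x)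
  s_id : ∀ x : A, s id x = x
  s_cyl : ∀ (σ τ : Fin n → Fin n) (Γ : Set (Fin n)) (x : A),
    (∀ i ∉ Γ, σ i = τ i) → s σ (c Γ x) = s τ (c Γ x)
  cyl_s : ∀ (σ : Fin n → Fin n) (Γ : Set (Fin n)) (x : A),
    Set.InjOn σ (σ ⁻¹' Γ) → c Γ (s σ x) = s σ (c (σ ⁻¹' Γ) x)
  c_empty : ∀ x : A, c ∅ x = x
  le_c : ∀ (Γ : Set (Fin n)) (x : A), x ≤ c Γ x
  c_bot : ∀ Γ : Set (Fin n), c Γ ⊥ = ⊥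
  c_insert : ∀ (i : Fin n) (Γ : Set (Fin n)) (x : A), c (insert i Γ) x = c {i} (c Γ x)

/-- A homomorphism from the diagonal-free reduct into a full set algebra. -/
structure SetRep {V : Type} (c : Set (Fin n) → A → A) (R : A → Set (Fin n → V)) : Prop where
  sup : ∀ x y : A, R (x ⊔ y) = R x ∪ R y
  compl : ∀ x : A, R xᶜ = (R x)ᶜ
  cyl : ∀ (Γ : Set (Fin n)) (x : A), R (c Γ x) = cylG Γ (R x)

variable {c : Set (Fin n) → A → A} {s : (Fin n → Fin n) → A → A} {V : Type}
  {R : A → Set (Fin n → V)}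

namespace SetRep

lemma top (hR : SetRep c R) : R ⊤ = Set.univ := by
  rw [← sup_compl_eq_top (x := (⊥ : A)), hR.sup, hR.compl, Set.union_compl_self]

lemma bot (hR : SetRep c R) : R ⊥ = ∅ := by
  rw [← compl_top, hR.compl, hR.top, Set.compl_univ]

lemma mono (hR : SetRep c R) {x y : A} (h : x ≤ y) : R x ⊆ R y := by
  rw [← sup_eq_right.2 h, hR.sup]
  exact Set.subset_union_left

lemma inf (hR : SetRep c R) (x y : A) : R (x ⊓ y) = R x ∩ R y := by
  rw [← compl_compl (x ⊓ y), compl_inf, hR.compl, hR.sup, hR.compl, hR.compl,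
    Set.compl_union, compl_compl, compl_compl]

end SetRep

namespace PolyAxioms

lemma s_top (h : PolyAxioms c s) (σ : Fin n → Fin n) : s σ ⊤ = ⊤ := by
  rw [← sup_compl_eq_top (x := (⊥ : A)), h.s_sup, h.s_compl, sup_compl_eq_top]
  simp

lemma s_bot (h : PolyAxioms c s) (σ : Fin n → Fin n) : s σ ⊥ = ⊥ := by
  rw [← compl_top, h.s_compl, h.s_top]

lemma s_mono (h : PolyAxioms c s) (σ : Fin n → Fin n) {x y : A} (hxy : x ≤ y) :
    s σ x ≤ s σ y := by
  rw [← sup_eq_right.2 hxy, h.s_sup]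
  exact le_sup_left

lemma s_inf (h : PolyAxioms c s) (σ : Fin n → Fin n) (x y : A) :
    s σ (x ⊓ y) = s σ x ⊓ s σ y := by
  rw [← compl_compl (x ⊓ y), compl_inf, h.s_compl, h.s_sup, h.s_compl, h.s_compl,
    compl_sup, compl_compl, compl_compl]

lemma s_symmDiff (h : PolyAxioms c s) (σ : Fin n → Fin n) (x y : A) :
    s σ (symmDiff x y) = symmDiff (s σ x) (s σ y) := by
  simp only [symmDiff, sdiff_eq, h.s_sup, h.s_inf, h.s_compl]

/-- Elements substituted along a map that misses `i` are closed under `c {i}`. -/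
lemma c_s_of_notMem_range (h : PolyAxioms c s) {σ : Fin n → Fin n} {i : Fin n}
    (hi : ∀ j, σ j ≠ i) (x : A) : c {i} (s σ x) = s σ x := by
  have hp : σ ⁻¹' {i} = ∅ := by
    ext j; simp [hi j]
  rw [h.cyl_s σ {i} x (by simp [hp]), hp, h.c_empty]

/-- `s [i/j] y ≤ c {i} y`. -/
lemma s_update_le (h : PolyAxioms c s) (i j : Fin n) (y : A) :
    s (update id i j) y ≤ c {i} y := by
  refine (h.s_mono _ (h.le_c {i} y)).trans (le_of_eq ?_)
  rw [h.s_cyl (update id i j) id {i} y, h.s_id]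
  intro k hk
  exact update_of_ne hk _ _

end PolyAxioms

/-- A representable diagonal-free reduct obeys the cylindrification laws of `PolyAxioms`. -/
lemma RepDf.polyAxioms (hc : RepDf c)
    (h1 : ∀ (σ : Fin n → Fin n) (x y : A), s σ (x ⊔ y) = s σ x ⊔ s σ y)
    (h2 : ∀ (σ : Fin n → Fin n) (x : A), s σ xᶜ = (s σ x)ᶜ)
    (h3 : ∀ (σ τ : Fin n → Fin n) (x : A), s (σ ∘ τ) x = s σ (s τ x))
    (h4 : ∀ x : A, s id x = x)
    (h5 : ∀ (σ τ : Fin n → Fin n) (Γ : Set (Fin n)) (x : A),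
      (∀ i ∉ Γ, σ i = τ i) → s σ (c Γ x) = s τ (c Γ x))
    (h6 : ∀ (σ : Fin n → Fin n) (Γ : Set (Fin n)) (x : A),
      Set.InjOn σ (σ ⁻¹' Γ) → c Γ (s σ x) = s σ (c (σ ⁻¹' Γ) x)) : PolyAxioms c s := by
  obtain ⟨ι, U, f, hinj, hsup, hcompl, hcyl⟩ := hc
  have hrep (k : ι) : SetRep c fun a => f a k :=
    ⟨fun x y => by rw [hsup]; rfl, fun x => by rw [hcompl]; rfl, fun Γ x => hcyl Γ x k⟩
  refine ⟨h1, h2, h3, h4, h5, h6, fun x => hinj ?_, fun Γ x => ?_, fun Γ => hinj ?_,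
    fun i Γ x => hinj ?_⟩
  · funext k
    ext v
    simp only [hcyl, cylG, Set.mem_ofPred_eq, Set.mem_empty_iff_false, not_false_eq_true,
      forall_const]
    exact ⟨fun ⟨z, hz, hv⟩ => funext hv ▸ hz, fun hv => ⟨v, hv, fun _ => rfl⟩⟩
  · refine sup_eq_right.1 (hinj ?_)
    funext k
    rw [hsup]
    exact Set.union_eq_right.2 fun v hv => by
      rw [hcyl]; exact ⟨v, hv, fun _ _ => rfl⟩
  · funext k
    rw [hcyl, (hrep k).bot]
    ext v
    simp [cylG]
  · funext k
    simp only [hcyl]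
    ext v
    constructor
    · rintro ⟨z, hz, hv⟩
      classical
      refine ⟨update v i (z i), ⟨z, hz, fun j hj => ?_⟩, fun j hj => ?_⟩
      · by_cases hji : j = i
        · subst hji; simp
        · rw [update_of_ne hji]; exact hv j (by simp [hji, hj])
      · exact (update_of_ne hj _ _).symm
    · rintro ⟨w, ⟨z, hz, hw⟩, hv⟩
      refine ⟨z, hz, fun j hj => ?_⟩
      rw [Set.mem_insert_iff, not_or] at hj
      rw [hv j hj.1, hw j hj.2]

end Axioms

section Twins

open Function Filter

variable {n : ℕ} {A : Type} [BooleanAlgebra A] {V : Type}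
  {c : Set (Fin n) → A → A} {s : (Fin n → Fin n) → A → A} {R : A → Set (Fin n → V)}

/-- `y` in coordinate `k` and `z` in coordinate `l` cannot be told apart: substituting `l` for `k`
has no effect on the tuples through them. -/
def Twin (s : (Fin n → Fin n) → A → A) (R : A → Set (Fin n → V)) (k l : Fin n) (y z : V) : Prop :=
  ∀ v : Fin n → V, v k = y → v l = z → ∀ a, v ∈ R (s (update id k l) a) ↔ v ∈ R a

lemma update_id_idem (k l : Fin n) :
    update id k l ∘ update id k l = (update id k l : Fin n → Fin n) := by
  funext j
  by_cases hj : j = k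
  · subst hj; by_cases hjl : l = j <;> simp [hjl]
  · simp [hj]

lemma exists_twin_finset (h : PolyAxioms c s) (hR : SetRep c R) {k l : Fin n} (hkl : k ≠ l)
    (B : Finset A) (z : V) :
    ∃ y, ∀ v : Fin n → V, v k = y → v l = z →
      ∀ a ∈ B, v ∈ R (s (update id k l) a) ↔ v ∈ R a := by
  classical
  set ε : Fin n → Fin n := update id k l with hε
  have hεε : ε ∘ ε = ε := update_id_idem k l
  set e : A := B.sup fun a => symmDiff (s ε a) a with he
  have hse : s ε e = ⊥ := by
    rw [he, Finset.apply_sup_eq_sup_comp (s ε) (h.s_sup ε) (h.s_bot ε)]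
    refine (Finset.sup_eq_bot_iff _ _).2 fun a _ => ?_
    simp only [comp_apply, h.s_symmDiff, ← h.s_comp, hεε, symmDiff_self]
  set Γ : Set (Fin n) := {k, l}ᶜ with hΓ
  have hpre : ε ⁻¹' Γ = Γ := by
    ext j
    by_cases hj : j = k
    · subst hj; simp [hε, hΓ]
    · simp [hε, hΓ, hj]
  have hsc : s ε (c Γ e) = ⊥ := by
    have hi : Set.InjOn ε (ε ⁻¹' Γ) := by
      rw [hpre]
      intro a ha b hb hab
      simp only [hΓ, Set.mem_compl_iff, Set.mem_insert_iff, Set.mem_singleton_iff, not_or] at ha hb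
      simpa [hε, ha.1, hb.1] using hab
    have := h.cyl_s ε Γ e hi
    rw [hpre, hse, h.c_bot] at this
    exact this.symm
  have hmem : (fun _ => z) ∈ R (c {k} (c Γ e)ᶜ) := by
    refine hR.mono (h.s_update_le k l _) ?_
    rw [h.s_compl, hsc, compl_bot, hR.top]
    trivial
  rw [hR.cyl] at hmem
  obtain ⟨w, hw, hwz⟩ := hmem
  refine ⟨w k, fun v hvk hvl a ha => ?_⟩
  have hv : v ∉ R e := by
    intro hv
    rw [hR.compl, hR.cyl] at hw
    refine hw ⟨v, hv, fun j hj => ?_⟩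
    simp only [hΓ, Set.mem_compl_iff, Set.mem_insert_iff, Set.mem_singleton_iff, not_not] at hj
    rcases hj with rfl | rfl
    · exact hvk.symm
    · rw [hvl]; exact (hwz _ (by simpa using hkl.symm)).symm
  have hva : v ∉ R (symmDiff (s ε a) a) :=
    fun hva => hv (hR.mono (Finset.le_sup (f := fun a => symmDiff (s ε a) a) ha) hva)
  simp only [symmDiff, sdiff_eq, hR.sup, hR.inf, hR.compl, Set.mem_union, Set.mem_inter_iff,
    Set.mem_compl_iff] at hva
  tauto

/-- A set representation extends to one, on an ultrapower, in which all twins exist. -/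
lemma exists_setRep_twin (h : PolyAxioms c s) (hR : SetRep c R) {x : A} (hx : (R x).Nonempty) :
    ∃ (V' : Type) (R' : A → Set (Fin n → V')), SetRep c R' ∧ (R' x).Nonempty ∧
      ∀ k l, k ≠ l → ∀ z, ∃ y, Twin s R' k l y z := by
  classical
  let 𝒰 : Ultrafilter (Finset A) := Ultrafilter.of atTop
  have h𝒰 : (𝒰 : Filter (Finset A)) ≤ atTop := Ultrafilter.of_le atTop
  let R' : A → Set (Fin n → Finset A → V) := fun a => {v | ∀ᶠ B in 𝒰, (fun i => v i B) ∈ R a}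
  refine ⟨Finset A → V, R', ⟨fun x y => ?_, fun x => ?_, fun Γ x => ?_⟩, ?_, ?_⟩
  · ext v
    simp only [R', hR.sup, Set.mem_union, Set.mem_ofPred_eq, Ultrafilter.eventually_or]
  · ext v
    simp only [R', hR.compl, Set.mem_compl_iff, Set.mem_ofPred_eq, Ultrafilter.eventually_not]
  · ext v
    simp only [R', hR.cyl]
    constructor
    · intro hv
      have hch : ∀ B, ∃ z : Fin n → V, (∀ i ∉ Γ, v i B = z i) ∧
          ((fun i => v i B) ∈ cylG Γ (R x) → z ∈ R x) := by
        intro B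
        by_cases hB : (fun i => v i B) ∈ cylG Γ (R x)
        · obtain ⟨z, hz, hvz⟩ := hB
          exact ⟨z, hvz, fun _ => hz⟩
        · exact ⟨fun i => v i B, fun _ _ => rfl, fun hB' => absurd hB' hB⟩
      choose z hz hzR using hch
      exact ⟨fun i B => z B i, Eventually.mono hv fun B hB => hzR B hB,
        fun i hi => funext fun B => hz B i hi⟩
    · rintro ⟨z, hz, hvz⟩
      exact Eventually.mono hz fun B hB => ⟨_, hB, fun i hi => congrFun (hvz i hi) B⟩
  · obtain ⟨v, hv⟩ := hx
    exact ⟨fun i _ => v i, Eventually.of_forall fun _ => hv⟩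
  · intro k l hkl z
    choose y hy using fun B => exists_twin_finset h hR hkl B (z B)
    refine ⟨y, fun v hvk hvl a => ?_⟩
    have ha : ∀ᶠ B in (𝒰 : Filter (Finset A)), a ∈ B :=
      h𝒰 ((eventually_ge_atTop {a}).mono fun B hB => hB (Finset.mem_singleton_self a))
    exact eventually_congr (ha.mono fun B hB =>
      hy B (fun i => v i B) (congrFun hvk B) (congrFun hvl B) a hB)

lemma Twin.symm (h : PolyAxioms c s) {k l : Fin n} {y z : V} (ht : Twin s R k l y z) :
    Twin s R l k z y := by
  intro v hl hk a
  rw [← ht v hk hl, ← h.s_comp]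
  have : update id k l ∘ update id l k = (update id k l : Fin n → Fin n) := by
    funext j
    by_cases hj : j = l
    · subst hj; by_cases hjk : j = k <;> simp [hjk]
    · simp [hj]
  rw [this, ht v hk hl]

lemma Twin.trans (h : PolyAxioms c s) (hR : SetRep c R) {k l m : Fin n} (hkl : k ≠ l)
    (hlm : l ≠ m) {x y z : V} (hxy : Twin s R k l x y) (hyz : Twin s R l m y z) :
    Twin s R k m x z := by
  intro v hk hm a
  set w := update v l y with hw
  have hwk : w k = x := by simp [hw, hkl, hk]
  have hwl : w l = y := by simp [hw]
  have hwm : w m = z := by simp [hw, hlm.symm, hm]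
  have hdiag (b : A) : w ∈ R (s (update id k m) b) ↔ w ∈ R b := by
    rw [← hxy w hwk hwl b, ← hyz w hwl hwm (s (update id k l) b),
      ← hxy w hwk hwl (s (update id k m) b), ← hyz w hwl hwm (s (update id k l) _),
      ← h.s_comp, ← h.s_comp, ← h.s_comp]
    have : (update id l m ∘ update id k l) ∘ update id k m =
        (update id l m ∘ update id k l : Fin n → Fin n) := by
      funext j
      by_cases hj : j = k
      · subst hj
        by_cases hjm : m = j
        · subst hjm; simp
        · simp [hjm, hlm.symm]
      · simp [hj]
    rw [this]
  have hempty (e : A) (he : s (update id k m) e = ⊥) : v ∉ R e := by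
    intro hve
    have hwe : w ∈ R (c {l} e) := by
      rw [hR.cyl]
      exact ⟨v, hve, fun j hj => by simp [hw, update_of_ne hj]⟩
    have hpre : (update id k m : Fin n → Fin n) ⁻¹' {l} = {l} := by
      ext j
      by_cases hj : j = k
      · subst hj; simp [hlm.symm, hkl]
      · simp [hj]
    have hc := h.cyl_s (update id k m) {l} e (by rw [hpre]; exact Set.injOn_singleton _ _)
    rw [hpre, he, h.c_bot] at hc
    rw [← hdiag, ← hc, hR.bot] at hwe
    exact hwe
  have h₁ := hempty (s (update id k m) a ⊓ aᶜ) (by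
    rw [h.s_inf, ← h.s_comp, update_id_idem, h.s_compl, inf_compl_eq_bot])
  have h₂ := hempty (a ⊓ (s (update id k m) a)ᶜ) (by
    rw [h.s_inf, h.s_compl, ← h.s_comp, update_id_idem, inf_compl_eq_bot])
  simp only [hR.inf, hR.compl, Set.mem_inter_iff, Set.mem_compl_iff] at h₁ h₂
  tauto

end Twins

section Labels

open Function

variable {n : ℕ} {A : Type} [BooleanAlgebra A]

/-- The action of a substitution on sets of elements, dual to `s σ`. -/
def pull (s : (Fin n → Fin n) → A → A) (σ : Fin n → Fin n) (F : Set A) : Set A :=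
  {a | s σ a ∈ F}

/-- A system assigning to every `n`-tuple of points a nonempty set of admissible ultrafilters,
closed under substitutions, such that the labels of tuples agreeing off `i` agree on
`c {i}`-closed elements and every cylindrification has a witness. -/
structure LabelSystem {P : Type} (c : Set (Fin n) → A → A) (s : (Fin n → Fin n) → A → A)
    (L : (Fin n → P) → Set (Set A)) : Prop where
  nonempty : ∀ p, (L p).Nonempty
  sup : ∀ p, ∀ F ∈ L p, ∀ x y : A, x ⊔ y ∈ F ↔ x ∈ F ∨ y ∈ F
  compl : ∀ p, ∀ F ∈ L p, ∀ x : A, xᶜ ∈ F ↔ x ∉ F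
  pull_mem : ∀ p, ∀ F ∈ L p, ∀ σ, pull s σ F ∈ L (p ∘ σ)
  cyl : ∀ p p' i, (∀ j ≠ i, p j = p' j) → ∀ F ∈ L p, ∀ F' ∈ L p', ∀ a ∈ F', c {i} a ∈ F
  witness : ∀ p, ∀ F ∈ L p, ∀ i a, c {i} a ∈ F → ∃ q, ∃ F' ∈ L (update p i q), a ∈ F'

variable {c : Set (Fin n) → A → A} {s : (Fin n → Fin n) → A → A}

lemma pull_pull (h : PolyAxioms c s) (σ τ : Fin n → Fin n) (F : Set A) :
    pull s τ (pull s σ F) = pull s (σ ∘ τ) F := by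
  ext a
  change s σ (s τ a) ∈ F ↔ s (σ ∘ τ) a ∈ F
  rw [h.s_comp]

lemma pull_id (h : PolyAxioms c s) (F : Set A) : pull s id F = F := by
  ext a
  change s id a ∈ F ↔ a ∈ F
  rw [h.s_id]

lemma LabelSystem.pull_eq {P : Type} {L : (Fin n → P) → Set (Set A)} (h : PolyAxioms c s)
    (hL : LabelSystem c s L) {p : Fin n → P} {F F' : Set A} (hF : F ∈ L p) (hF' : F' ∈ L p)
    {σ : Fin n → Fin n} (hσ : ¬ Injective σ) : pull s σ F = pull s σ F' := by
  rw [Finite.injective_iff_surjective] at hσ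
  obtain ⟨i, hi⟩ := not_forall.1 hσ
  have hi' : ∀ j, σ j ≠ i := fun j hj => hi ⟨j, hj⟩
  ext a
  constructor <;> intro ha
  · have := hL.cyl p p i (fun _ _ => rfl) F' hF' F hF _ ha
    rwa [h.c_s_of_notMem_range hi'] at this
  · have := hL.cyl p p i (fun _ _ => rfl) F hF F' hF' _ ha
    rwa [h.c_s_of_notMem_range hi'] at this

/-- There is a cover `π : U → P` with a symmetric colouring `χ` of `n`-tuples and a canonical
enumeration `ord` of them, so generic that any `n - 1` points can be completed by a
point over a given `q` to a tuple of any given colour, with a prescribed enumeration. -/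
lemma exists_generic_cover (n : ℕ) (P C : Type) [Nonempty P] [Nonempty C] :
    ∃ (U : Type) (π : U → P) (χ : (Fin n → U) → C) (ord : (Fin n → U) → Equiv.Perm (Fin n)),
      Nonempty U ∧
      (∀ u (τ : Equiv.Perm (Fin n)), χ (u ∘ τ) = χ u) ∧
      (∀ u, Injective u → ∀ τ : Equiv.Perm (Fin n), ord (u ∘ τ) = τ⁻¹ * ord u) ∧
      ∀ u i q, ∃ ρ, ∀ b, ∃ z, π z = q ∧ χ (update u i z) = b ∧
        (Set.InjOn u {i}ᶜ → Injective (update u i z) ∧ ord (update u i z) = ρ) := by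
  classical
  let G := FreeAbelianGroup C
  let T := G × P
  let _ : LinearOrder T := linearOrderOfSTO (WellOrderingRel (α := T))
  let U := ℕ ×ₗ T
  let tag : U → ℕ := fun u => (ofLex u).1
  let wt : U → G := fun u => (ofLex u).2.1
  have hord : ∀ u : Fin n → U, Injective u → ∀ ρ : Equiv.Perm (Fin n), Monotone (u ∘ ρ) →
      Tuple.sort u = ρ := by
    intro u hu ρ hρ
    have := (Tuple.comp_sort_eq_comp_iff_monotone (f := u) (σ := ρ)).2 hρ
    exact (Equiv.ext fun j => hu (congrFun this j)).symm
  refine ⟨U, fun u => (ofLex u).2.2, fun u => invFun FreeAbelianGroup.of (∑ i, wt (u i)),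
    Tuple.sort, inferInstance, ?_, ?_, ?_⟩
  · intro u τ
    simp only [comp_apply]
    rw [Equiv.sum_comp τ fun i => wt (u i)]
  · intro u hu τ
    refine hord _ (hu.comp τ.injective) _ ?_
    have : (u ∘ τ) ∘ ⇑(τ⁻¹ * Tuple.sort u) = u ∘ Tuple.sort u := by
      funext j; simp
    rw [this]
    exact Tuple.monotone_sort u
  · intro u i q
    let M := (∑ j, tag (u j)) + 1
    have hM : ∀ (g : G) (j : Fin n), u j < (toLex (M, (g, q)) : U) := by
      intro g j
      refine (Prod.Lex.lt_iff).2 (Or.inl ?_)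
      exact Nat.lt_succ_of_le
        (Finset.single_le_sum (f := fun j => tag (u j)) (fun _ _ => Nat.zero_le _)
          (Finset.mem_univ j))
    refine ⟨Tuple.sort (update u i (toLex (M, ((0 : G), q)) : U)), fun b => ?_⟩
    let g : G := FreeAbelianGroup.of b - ∑ j ∈ Finset.univ.erase i, wt (u j)
    refine ⟨toLex (M, (g, q)), rfl, ?_, fun hinj => ?_⟩
    · have : ∑ j, wt (update u i (toLex (M, (g, q))) j) = FreeAbelianGroup.of b := by
        rw [← Finset.add_sum_erase _ _ (Finset.mem_univ i), update_self]
        rw [Finset.sum_congr rfl (g := fun j => wt (u j))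
          (fun j hj => by rw [update_of_ne (Finset.ne_of_mem_erase hj)])]
        exact sub_add_cancel _ _
      beta_reduce
      rw [this]
      exact leftInverse_invFun FreeAbelianGroup.of_injective b
    · have hup : Injective (update u i (toLex (M, (g, q)) : U)) := by
        intro a b hab
        by_cases ha : a = i <;> by_cases hb : b = i
        · rw [ha, hb]
        · rw [ha, update_self, update_of_ne hb] at hab
          exact absurd hab.symm (hM g b).ne
        · rw [hb, update_self, update_of_ne ha] at hab
          exact absurd hab (hM g a).ne
        · rw [update_of_ne ha, update_of_ne hb] at hab
          exact hinj ha hb hab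
      refine ⟨hup, hord _ hup _ ?_⟩
      intro a b hab
      have hs := Tuple.monotone_sort (update u i (toLex (M, ((0 : G), q)) : U)) hab
      generalize Tuple.sort (update u i (toLex (M, ((0 : G), q)) : U)) = ρ at hs ⊢
      simp only [comp_apply] at hs ⊢
      by_cases ha : ρ a = i <;> by_cases hb : ρ b = i
      · rw [ha, hb]
      · rw [ha, update_self, update_of_ne hb] at hs
        exact absurd hs (hM 0 _).not_ge
      · rw [hb, update_self, update_of_ne ha]
        exact (hM g _).le
      · rwa [update_of_ne ha, update_of_ne hb] at hs ⊢

/-- A label system can be realised by a single-valued one. -/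
lemma LabelSystem.exists_labelling {P : Type} [Nonempty P] {L : (Fin n → P) → Set (Set A)}
    (h : PolyAxioms c s) (hL : LabelSystem c s L) [Nonempty (Fin n)] :
    ∃ (U : Type) (π : U → P) (N : (Fin n → U) → Set A), Nonempty U ∧
      (∀ u, N u ∈ L (π ∘ u)) ∧ (∀ u τ, N (u ∘ τ) = pull s τ (N u)) ∧
      ∀ u i a, c {i} a ∈ N u → ∃ z, a ∈ N (update u i z) := by
  classical
  obtain ⟨U, π, χ, ord, hU, hχ, hord, hgen⟩ := exists_generic_cover n P (Set A)
  choose d hd using hL.nonempty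
  let ℓ : (Fin n → P) → Set A → Set A := fun r F => if F ∈ L r then F else d r
  have hℓ : ∀ r F, ℓ r F ∈ L r := by
    intro r F
    by_cases hF : F ∈ L r
    · simp [ℓ, hF]
    · simpa [ℓ, hF] using hd r
  let N₀ : (Fin n → U) → Set A := fun u => pull s ⇑(ord u)⁻¹ (ℓ (π ∘ u ∘ ord u) (χ u))
  have hN₀ : ∀ u, N₀ u ∈ L (π ∘ u) := by
    intro u
    have := hL.pull_mem _ _ (hℓ (π ∘ u ∘ ord u) (χ u)) ⇑(ord u)⁻¹
    have he : (π ∘ u ∘ ord u) ∘ ⇑(ord u)⁻¹ = π ∘ u := by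
      funext j; simp
    rwa [he] at this
  have hN₀eq : ∀ u, Injective u → ∀ τ : Equiv.Perm (Fin n), N₀ (u ∘ τ) = pull s τ (N₀ u) := by
    intro u hu τ
    have he : (u ∘ τ) ∘ ⇑(τ⁻¹ * ord u) = u ∘ ord u := by
      funext j; simp
    have he' : (⇑(τ⁻¹ * ord u)⁻¹ : Fin n → Fin n) = ⇑(ord u)⁻¹ ∘ τ := by
      funext j; simp
    simp only [N₀, hord u hu τ, hχ]
    rw [he, he', pull_pull h]
  let e : (Fin n → U) → Fin n → Fin n := fun u i => invFun u (u i)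
  have he : ∀ (u : Fin n → U) i, u (e u i) = u i := fun u i => invFun_eq ⟨i, rfl⟩
  have heinj : ∀ u, Injective u → e u = id := fun u hu => funext fun i => hu (he u i)
  have hnoninj : ∀ u, ¬ Injective u → ¬ Injective (e u) := by
    intro u hu heu
    refine hu fun a b hab => heu ?_
    simp only [e, hab]
  let N : (Fin n → U) → Set A := fun u => pull s (e u) (N₀ u)
  have hN : ∀ u, N u ∈ L (π ∘ u) := by
    intro u
    have := hL.pull_mem _ _ (hN₀ u) (e u)
    have hu : (π ∘ u) ∘ e u = π ∘ u := by
      funext i; simp [he]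
    rwa [hu] at this
  have hNinj : ∀ u, Injective u → N u = N₀ u := by
    intro u hu
    simp only [N, heinj u hu, pull_id h]
  have hNeq : ∀ u τ, N (u ∘ τ) = pull s τ (N u) := by
    intro u τ
    by_cases hi : Injective (u ∘ τ)
    · have hτ : Injective τ := hi.of_comp
      have hτ' : Bijective τ := Finite.injective_iff_bijective.1 hτ
      have hu : Injective u := by
        intro a b hab
        obtain ⟨a, rfl⟩ := hτ'.2 a
        obtain ⟨b, rfl⟩ := hτ'.2 b
        rw [hi hab]
      rw [hNinj _ hi, hNinj _ hu]
      exact hN₀eq u hu (Equiv.ofBijective τ hτ')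
    · have h₁ : pull s τ (N u) ∈ L (π ∘ u ∘ τ) := hL.pull_mem _ _ (hN u) τ
      change pull s (e (u ∘ τ)) (N₀ (u ∘ τ)) = _
      rw [hL.pull_eq h (hN₀ _) h₁ (hnoninj _ hi)]
      simp only [N]
      generalize N₀ u = F
      rw [pull_pull h, pull_pull h, pull_pull h]
      congr 1
      funext i
      have := he (u ∘ τ) i
      simp only [comp_apply] at this ⊢
      change invFun u (u _) = invFun u (u _)
      rw [this]
  refine ⟨U, π, N, hU, hN, hNeq, fun u i a ha => ?_⟩
  by_cases hinj : Set.InjOn u {i}ᶜ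
  · obtain ⟨q, F, hF, haF⟩ := hL.witness _ _ (hN u) i a ha
    obtain ⟨ρ, hρ⟩ := hgen u i q
    obtain ⟨z, hz, hχz, hz'⟩ := hρ (pull s ρ F)
    obtain ⟨hi, hoz⟩ := hz' hinj
    refine ⟨z, ?_⟩
    have hπ : π ∘ update u i z = update (π ∘ u) i q := by
      rw [comp_update, hz]
    have hmem : pull s ρ F ∈ L (π ∘ update u i z ∘ ρ) := by
      have := hL.pull_mem _ _ hF ρ
      rwa [← hπ] at this
    rw [hNinj _ hi]
    simp only [N₀, ℓ, hoz, hχz, if_pos hmem]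
    rw [pull_pull h]
    have : (ρ : Fin n → Fin n) ∘ ⇑ρ⁻¹ = id := by funext j; simp
    rwa [this, pull_id h]
  · simp only [Set.InjOn, Set.mem_compl_iff, Set.mem_singleton_iff, not_forall] at hinj
    obtain ⟨j, hj, k, hk, hjk, hne⟩ := hinj
    let ε : Fin n → Fin n := update id j k
    have hε : ∀ w : Fin n → U, w j = w k → w ∘ ε = w := by
      intro w hw
      funext m
      by_cases hm : m = j
      · subst hm; simp [ε, hw]
      · simp [ε, hm]
    have hpre : ε ⁻¹' {i} = {i} := by
      ext m
      by_cases hm : m = j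
      · subst hm; simp [ε, hj, hk]
      · simp [ε, hm]
    have hcs : c {i} (s ε a) = s ε (c {i} a) := by
      rw [h.cyl_s ε {i} a (by rw [hpre]; exact Set.injOn_singleton _ _), hpre]
    have hεn : ¬ Injective ε := by
      intro hi
      refine hne (hi ?_)
      simp [ε, Ne.symm hne]
    have ha' : c {i} (s ε a) ∈ N u := by
      rw [hcs]
      change c {i} a ∈ pull s ε (N u)
      rwa [← hNeq, hε u hjk]
    obtain ⟨q, F, hF, haF⟩ := hL.witness _ _ (hN u) i _ ha'
    obtain ⟨ρ, hρ⟩ := hgen u i q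
    obtain ⟨z, hz, -⟩ := hρ F
    have hπ : π ∘ update u i z = update (π ∘ u) i q := by
      rw [comp_update, hz]
    refine ⟨z, ?_⟩
    rw [← hε (update u i z) (by rw [update_of_ne hj, update_of_ne hk, hjk]), hNeq,
      hL.pull_eq h (hN _) (hπ ▸ hF) hεn]
    exact haF

end Labels

section Placements

open Function

variable {n : ℕ} {A V : Type}
  {c : Set (Fin n) → A → A} {s : (Fin n → Fin n) → A → A} {R : A → Set (Fin n → V)}

/-- Coherent families of twins, one in each coordinate. -/
def TwinFamily (s : (Fin n → Fin n) → A → A) (R : A → Set (Fin n → V)) : Type :=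
  {q : Fin n → V // ∀ k l, k ≠ l → Twin s R k l (q k) (q l)}

/-- `y` in coordinate `k` is a twin of the members of the family `q` in the other coordinates. -/
def Near (q : TwinFamily s R) (k : Fin n) (y : V) : Prop :=
  ∀ l, l ≠ k → Twin s R k l y (q.1 l)

lemma near_self (q : TwinFamily s R) (k : Fin n) : Near q k (q.1 k) :=
  fun l hl => q.2 k l hl.symm

variable [BooleanAlgebra A]

lemma exists_ne_ne (hn : 3 ≤ n) (k l : Fin n) : ∃ m, m ≠ k ∧ m ≠ l := by
  have : ({k, l} : Finset (Fin n)).card < (Finset.univ : Finset (Fin n)).card := by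
    rw [Finset.card_univ, Fintype.card_fin]
    exact lt_of_le_of_lt Finset.card_le_two hn
  obtain ⟨m, -, hm⟩ := Finset.exists_mem_notMem_of_card_lt_card this
  simp only [Finset.mem_insert, Finset.mem_singleton, not_or] at hm
  exact ⟨m, hm⟩

lemma Near.twin (hn : 3 ≤ n) (h : PolyAxioms c s) (hR : SetRep c R) {q : TwinFamily s R}
    {k l : Fin n} {y z : V} (hy : Near q k y) (hz : Near q l z) :
    Twin s R k l y z := by
  obtain ⟨m, hmk, hml⟩ := exists_ne_ne hn k l
  exact (hy m hmk).trans h hR hmk.symm hml ((hz m hml).symm h)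

lemma Near.of_twin (hn : 3 ≤ n) (h : PolyAxioms c s) (hR : SetRep c R) {q : TwinFamily s R}
    {k m : Fin n} (hkm : k ≠ m) {y z : V} (hy : Near q m y) (hz : Twin s R k m z y) :
    Near q k z := by
  have key : ∀ l, l ≠ k → l ≠ m → Twin s R k l z (q.1 l) := fun l _ hlm =>
    hz.trans h hR hkm hlm.symm (hy l hlm)
  intro l hlk
  by_cases hlm : l = m
  · subst hlm
    obtain ⟨o, hok, hol⟩ := exists_ne_ne hn k l
    exact (key o hok hol).trans h hR hok.symm hol (q.2 o l hol)
  · exact key l hlk hlm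

lemma exists_near (h : PolyAxioms c s) (hR : SetRep c R)
    (ht : ∀ k l, k ≠ l → ∀ z, ∃ y, Twin s R k l y z) (k : Fin n) (z : V) :
    ∃ q : TwinFamily s R, q.1 k = z := by
  choose! t ht using ht
  refine ⟨⟨fun l => if l = k then z else t l k z, fun l m hlm => ?_⟩, by simp⟩
  by_cases hl : l = k <;> by_cases hm : m = k
  · exact absurd (hl.trans hm.symm) hlm
  · subst hl
    simpa [hm] using (ht m l hm z).symm h
  · subst hm
    simpa [hl] using ht l m hl z
  · simpa [hl, hm] using (ht l k hl z).trans h hR hl (Ne.symm hm) ((ht m k hm z).symm h)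

lemma exists_free (σ : Fin n → Fin n) (i : Fin n) : ∃ k, ∀ j ≠ i, σ j ≠ k := by
  by_contra! hcon
  choose g hg hσ using hcon
  have hinj : Injective g := fun a b hab => by rw [← hσ a, ← hσ b, hab]
  obtain ⟨k, hk⟩ := Finite.injective_iff_surjective.1 hinj i
  exact hg k hk

lemma PolyAxioms.s_cyl_congr (h : PolyAxioms c s) {σ τ : Fin n → Fin n} {i : Fin n} {a : A}
    (hστ : ∀ j ≠ i, σ j = τ j) : s σ (c {i} a) = s τ (c {i} a) :=
  h.s_cyl σ τ {i} a hστ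

/-- Move the `i`-th coordinate out of the way of the others. -/
lemma PolyAxioms.s_cyl_eq (h : PolyAxioms c s) {σ : Fin n → Fin n} {i k : Fin n}
    {Γ : Set (Fin n)} (hkΓ : k ∈ Γ) (hΓ : ∀ j ≠ i, σ j ∉ Γ) (a : A) :
    s σ (c {i} a) = c Γ (s (update σ i k) a) := by
  have hpre : update σ i k ⁻¹' Γ = {i} := by
    ext j
    by_cases hj : j = i
    · subst hj; simp [hkΓ]
    · simp [hj, hΓ j hj]
  rw [h.cyl_s _ _ _ (by rw [hpre]; exact Set.injOn_singleton _ _), hpre]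
  exact h.s_cyl_congr fun j hj => (update_of_ne hj _ _).symm

/-- Whether `v` satisfies `s σ (c {i} a)` depends only on the values `v (σ j)` with `j ≠ i`. -/
lemma mem_congr_of_eq (h : PolyAxioms c s) (hR : SetRep c R) {σ : Fin n → Fin n} {i : Fin n}
    {a : A} {v w : Fin n → V} (hvw : ∀ j ≠ i, v (σ j) = w (σ j)) :
    v ∈ R (s σ (c {i} a)) ↔ w ∈ R (s σ (c {i} a)) := by
  obtain ⟨k, hk⟩ := exists_free σ i
  rw [h.s_cyl_eq (Γ := {l | ∀ j ≠ i, σ j ≠ l}) hk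
    (fun j hj hmem => hmem j hj rfl) a, hR.cyl]
  have hvw' : ∀ l ∉ {l | ∀ j ≠ i, σ j ≠ l}, v l = w l := by
    intro l hl
    simp only [Set.mem_ofPred_eq, not_forall, not_not] at hl
    obtain ⟨j, hj, rfl⟩ := hl
    exact hvw j hj
  constructor <;> rintro ⟨z, hz, hvz⟩ <;> refine ⟨z, hz, fun l hl => ?_⟩
  · rw [← hvw' l hl, hvz l hl]
  · rw [hvw' l hl, hvz l hl]

/-- Coordinates may be moved between positions occupied by twins. -/
lemma mem_congr_of_twin (h : PolyAxioms c s) {σ τ : Fin n → Fin n} {i k l : Fin n} {a : A}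
    {v : Fin n → V} (ht : Twin s R k l (v k) (v l))
    (hστ : ∀ j ≠ i, σ j = τ j ∨ σ j = l ∧ τ j = k) :
    v ∈ R (s σ (c {i} a)) ↔ v ∈ R (s τ (c {i} a)) := by
  rw [← ht v rfl rfl, ← h.s_comp, ← ht v rfl rfl (s τ _), ← h.s_comp,
    h.s_cyl_congr (σ := update id k l ∘ σ) (τ := update id k l ∘ τ)]
  intro j hj
  rcases hστ j hj with hj | ⟨h₁, h₂⟩
  · simp [hj]
  · simp only [comp_apply, h₁, h₂, update_self]
    by_cases hkl : l = k
    · simp [hkl]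
    · simp [hkl]

/-- The truth value of `s σ (c {i} a)` at `v` depends only on the twin families of the
values `v (σ j)` with `j ≠ i`: any two such placements of the points are connected by moving one
coordinate at a time, using a free position as a buffer. -/
lemma mem_congr_of_near (hn : 3 ≤ n) (h : PolyAxioms c s) (hR : SetRep c R)
    (ht : ∀ k l, k ≠ l → ∀ z, ∃ y, Twin s R k l y z) {i : Fin n} {a : A}
    {p : Fin n → TwinFamily s R} {σ' : Fin n → Fin n} {v' : Fin n → V}
    (hp' : ∀ j ≠ i, Near (p j) (σ' j) (v' (σ' j))) {σ : Fin n → Fin n} {v : Fin n → V}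
    (hp : ∀ j ≠ i, Near (p j) (σ j) (v (σ j))) :
    v ∈ R (s σ (c {i} a)) ↔ v' ∈ R (s σ' (c {i} a)) := by
  classical
  let wrong : (Fin n → Fin n) → (Fin n → V) → Finset (Fin n) := fun σ v =>
    {j | j ≠ i ∧ ¬ (σ j = σ' j ∧ v (σ j) = v' (σ' j))}
  have hwrong : ∀ σ v j, j ∈ wrong σ v ↔ j ≠ i ∧ ¬ (σ j = σ' j ∧ v (σ j) = v' (σ' j)) := by
    simp [wrong]
  suffices main : ∀ N σ v, (∀ j ≠ i, Near (p j) (σ j) (v (σ j))) → (wrong σ v).card ≤ N →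
      (v ∈ R (s σ (c {i} a)) ↔ v' ∈ R (s σ' (c {i} a))) from main _ σ v hp le_rfl
  have base : ∀ σ v, wrong σ v = ∅ →
      (v ∈ R (s σ (c {i} a)) ↔ v' ∈ R (s σ' (c {i} a))) := by
    intro σ v hw
    have hright : ∀ j ≠ i, σ j = σ' j ∧ v (σ j) = v' (σ' j) := by
      intro j hj
      by_contra hcon
      have := (hwrong σ v j).2 ⟨hj, hcon⟩
      simp [hw] at this
    rw [h.s_cyl_congr fun j hj => (hright j hj).1]
    exact mem_congr_of_eq h hR fun j hj => by rw [← (hright j hj).2, (hright j hj).1]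
  intro N
  induction N with
  | zero =>
    intro σ v _ hcard
    exact base σ v (Finset.card_eq_zero.1 (Nat.le_zero.1 hcard))
  | succ N ih =>
    have direct : ∀ σ v, (∀ j ≠ i, Near (p j) (σ j) (v (σ j))) → (wrong σ v).card ≤ N + 1 →
        ∀ j ∈ wrong σ v, v (σ' j) = v' (σ' j) →
        (v ∈ R (s σ (c {i} a)) ↔ v' ∈ R (s σ' (c {i} a))) := by
      intro σ v hp hcard j hj hv
      obtain ⟨hji, hjw⟩ := (hwrong σ v j).1 hj
      have hne : σ j ≠ σ' j := fun heq => hjw ⟨heq, by rw [heq, hv]⟩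
      have hnear : Near (p j) (σ' j) (v (σ' j)) := hv ▸ hp' j hji
      rw [mem_congr_of_twin h (τ := update σ j (σ' j))
        (hnear.twin hn h hR (hp j hji))]
      · refine ih _ _ ?_ ?_
        · intro j' hj'
          by_cases hjj : j' = j
          · subst hjj; simpa using hnear
          · simpa [hjj] using hp j' hj'
        · refine Nat.le_of_lt_succ (lt_of_lt_of_le (Finset.card_lt_card ?_) hcard)
          refine (Finset.ssubset_iff_of_subset ?_).2 ⟨j, hj, ?_⟩
          · intro j' hj'
            rw [hwrong] at hj' ⊢
            by_cases hjj : j' = j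
            · subst hjj; simp [hv] at hj'
            · simpa [hjj] using hj'
          · rw [hwrong]; simp [hv]
      · intro j' _
        by_cases hjj : j' = j
        · subst hjj; right; simp
        · left; simp [hjj]
    intro σ v hp hcard
    rcases (wrong σ v).eq_empty_or_nonempty with hw | ⟨j, hj⟩
    · exact base σ v hw
    by_cases hv : v (σ' j) = v' (σ' j)
    · exact direct σ v hp hcard j hj hv
    obtain ⟨hji, -⟩ := (hwrong σ v j).1 hj
    set m := σ' j with hm
    obtain ⟨k, hk⟩ := exists_free σ i
    obtain ⟨y, hy⟩ : ∃ y, k ≠ m → Twin s R k m y (v m) := by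
      by_cases hkm : k = m
      · exact ⟨v m, fun hkm' => absurd hkm hkm'⟩
      · exact (ht k m hkm (v m)).imp fun y hy _ => hy
    let σ₁ : Fin n → Fin n := fun l => if σ l = m then k else σ l
    have hσ₁ : ∀ l ≠ i, σ₁ l ≠ m := by
      intro l hl hlm
      by_cases hσ : σ l = m
      · simp only [σ₁, hσ, if_true] at hlm
        exact hk l hl (hσ.trans hlm.symm)
      · simp only [σ₁, hσ, if_false] at hlm
    let v₁ := update v k y
    let v₂ := update v₁ m (v' m)
    have hstep₁ : v ∈ R (s σ (c {i} a)) ↔ v₁ ∈ R (s σ (c {i} a)) :=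
      mem_congr_of_eq h hR fun l hl => (update_of_ne (hk l hl) _ _).symm
    have hstep₂ : v₁ ∈ R (s σ (c {i} a)) ↔ v₁ ∈ R (s σ₁ (c {i} a)) := by
      by_cases hkm : k = m
      · have : σ₁ = σ := by
          funext l
          by_cases hl : σ l = m
          · simp [σ₁, hl, hkm]
          · simp [σ₁, hl]
        rw [this]
      · refine mem_congr_of_twin h (k := k) (l := m) ?_ fun l _ => ?_
        · simpa [v₁, Ne.symm hkm] using hy hkm
        · by_cases hl : σ l = m <;> simp [σ₁, hl]
    have hstep₃ : v₁ ∈ R (s σ₁ (c {i} a)) ↔ v₂ ∈ R (s σ₁ (c {i} a)) :=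
      mem_congr_of_eq h hR fun l hl => (update_of_ne (hσ₁ l hl) _ _).symm
    have hv₂ : ∀ l, l ≠ m → l ≠ k → v₂ l = v l := by
      intro l hlm hlk
      simp [v₂, v₁, hlm, hlk]
    rw [hstep₁, hstep₂, hstep₃]
    refine direct σ₁ v₂ ?_ ?_ j ?_ ?_
    · intro l hl
      by_cases hlm : σ l = m
      · have hkm : k ≠ m := fun hkm => hk l hl (hlm.trans hkm.symm)
        have := hp l hl
        rw [hlm] at this
        simpa [σ₁, hlm, v₂, v₁, hkm] using this.of_twin hn h hR hkm (hy hkm)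
      · simpa [σ₁, hlm, hv₂ _ hlm (hk l hl)] using hp l hl
    · refine (Finset.card_le_card fun l hl => ?_).trans hcard
      rw [hwrong] at hl ⊢
      refine ⟨hl.1, fun hr => hl.2 ?_⟩
      have hlm : σ l ≠ m := by
        intro hlm
        rw [← hr.1, hlm] at hr
        exact hv hr.2
      simpa [σ₁, hlm, hv₂ _ hlm (hk l hl.1)] using hr
    · rw [hwrong]
      exact ⟨hji, fun hr => hσ₁ j hji hr.1⟩
    · simp [v₂, ← hm]

/-- The labels of a tuple `p` of twin families: the types of its placements. -/
def placementLabels (s : (Fin n → Fin n) → A → A) (R : A → Set (Fin n → V))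
    (p : Fin n → TwinFamily s R) : Set (Set A) :=
  {F | ∃ (σ : Fin n → Fin n) (v : Fin n → V),
    (∀ j, Near (p j) (σ j) (v (σ j))) ∧ F = {a | v ∈ R (s σ a)}}

lemma placementLabels_labelSystem (hn : 3 ≤ n) (h : PolyAxioms c s) (hR : SetRep c R)
    (ht : ∀ k l, k ≠ l → ∀ z, ∃ y, Twin s R k l y z) :
    LabelSystem c s (placementLabels s R) where
  nonempty p := ⟨_, id, fun j => (p j).1 j, fun j => near_self (p j) j, rfl⟩
  sup := by
    rintro p _ ⟨σ, v, -, rfl⟩ x y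
    simp [h.s_sup, hR.sup]
  compl := by
    rintro p _ ⟨σ, v, -, rfl⟩ x
    simp [h.s_compl, hR.compl]
  pull_mem := by
    rintro p _ ⟨σ, v, hp, rfl⟩ τ
    refine ⟨σ ∘ τ, v, fun j => hp (τ j), ?_⟩
    ext a
    simp [pull, h.s_comp]
  cyl := by
    rintro p p' i hpp _ ⟨σ, v, hp, rfl⟩ _ ⟨σ', v', hp', rfl⟩ a ha
    refine (mem_congr_of_near hn h hR ht (p := p) (σ' := σ') (v' := v')
      (fun j hj => ?_) fun j _ => hp j).2 (hR.mono (h.s_mono σ' (h.le_c {i} a)) ha)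
    rw [hpp j hj]
    exact hp' j
  witness := by
    rintro p _ ⟨σ, v, hp, rfl⟩ i a ha
    obtain ⟨k, hk⟩ := exists_free σ i
    change v ∈ R (s σ (c {i} a)) at ha
    rw [h.s_cyl_eq (Set.mem_singleton k) hk, hR.cyl] at ha
    obtain ⟨w, hw, hvw⟩ := ha
    obtain ⟨q, hq⟩ := exists_near h hR ht k (w k)
    refine ⟨q, _, ⟨update σ i k, w, fun j => ?_, rfl⟩, hw⟩
    by_cases hj : j = i
    · subst hj
      simpa [← hq] using near_self q k
    · simpa [hj, ← hvw (σ j) (hk j hj)] using hp j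

end Placements

section Main

open Function

variable {n : ℕ} {A : Type} [BooleanAlgebra A]
  {c : Set (Fin n) → A → A} {s : (Fin n → Fin n) → A → A}

lemma RepPoly.repDf (hr : RepPoly c s) : RepDf c := by
  obtain ⟨ι, U, f, hinj, hsup, hcompl, hcyl, -⟩ := hr
  exact ⟨ι, U, f, hinj, hsup, hcompl, hcyl⟩

lemma subG_cylG_congr {U : Type} {σ τ : Fin n → Fin n} {Γ : Set (Fin n)}
    (hστ : ∀ i ∉ Γ, σ i = τ i) (X : Set (Fin n → U)) :
    subG σ (cylG Γ X) = subG τ (cylG Γ X) := by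
  ext v
  constructor <;> rintro ⟨z, hz, hv⟩ <;> refine ⟨z, hz, fun i hi => ?_⟩
  · rw [← hv i hi, comp_apply, comp_apply, hστ i hi]
  · rw [← hv i hi, comp_apply, comp_apply, hστ i hi]

lemma cylG_subG {U : Type} {σ : Fin n → Fin n} {Γ : Set (Fin n)}
    (hσ : Set.InjOn σ (σ ⁻¹' Γ)) (X : Set (Fin n → U)) :
    cylG Γ (subG σ X) = subG σ (cylG (σ ⁻¹' Γ) X) := by
  classical
  ext v
  constructor
  · rintro ⟨z, hz, hv⟩
    exact ⟨z ∘ σ, hz, fun i hi => hv (σ i) hi⟩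
  · rintro ⟨z, hz, hv⟩
    have hch : ∀ k, ∃ y, (k ∉ Γ → y = v k) ∧ ∀ i, σ i = k → k ∈ Γ → y = z i := by
      intro k
      by_cases hk : ∃ i, σ i = k ∧ k ∈ Γ
      · obtain ⟨i, rfl, hi⟩ := hk
        exact ⟨z i, fun hi' => absurd hi hi', fun j hj _ =>
          congrArg z (hσ hi (by simpa [hj] using hi) hj.symm)⟩
      · exact ⟨v k, fun _ => rfl, fun i hi hk' => absurd ⟨i, hi, hk'⟩ hk⟩
    choose w hw hwσ using hch
    refine ⟨w, ?_, fun k hk => (hw k hk).symm⟩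
    have : w ∘ σ = z := by
      funext i
      by_cases hi : σ i ∈ Γ
      · exact hwσ (σ i) i rfl hi
      · rw [comp_apply, hw _ hi]
        exact hv i hi
    change w ∘ σ ∈ X
    rwa [this]

/-- Every nonzero element survives in some homomorphism to a full polyadic set algebra. -/
lemma exists_hom (hn : 3 ≤ n) (h : PolyAxioms c s) (hc : RepDf c) {x : A} (hx : x ≠ ⊥) :
    ∃ (U : Type) (f : A → Set (Fin n → U)), SetRep c f ∧
      (∀ σ a, f (s σ a) = subG σ (f a)) ∧ (f x).Nonempty := by
  obtain ⟨ι, U₀, f₀, hinj, hsup, hcompl, hcyl⟩ := hc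
  have hrep (k : ι) : SetRep c fun a => f₀ a k :=
    ⟨fun x y => by rw [hsup]; rfl, fun x => by rw [hcompl]; rfl, fun Γ x => hcyl Γ x k⟩
  obtain ⟨k, hk⟩ : ∃ k, (f₀ x k).Nonempty := by
    by_contra! hcon
    exact hx (hinj (funext fun k => by rw [hcon k, (hrep k).bot]))
  obtain ⟨V, R, hR, ⟨v₀, hv₀⟩, ht⟩ := exists_setRep_twin h (hrep k) hk
  have : Nonempty (Fin n) := ⟨⟨0, by omega⟩⟩
  have : Nonempty (TwinFamily s R) :=
    ⟨(exists_near h hR ht ⟨0, by omega⟩ (v₀ ⟨0, by omega⟩)).choose⟩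
  have hL := placementLabels_labelSystem hn h hR ht
  obtain ⟨U, π, N, ⟨u₀⟩, hN, hpull, hwit⟩ := hL.exists_labelling h
  let f : A → Set (Fin n → U) := fun a => {u | a ∈ N u}
  have hcyl' : ∀ (Γ : Set (Fin n)) (a : A), f (c Γ a) = cylG Γ (f a) := by
    intro Γ
    induction Γ, Γ.toFinite using Set.Finite.induction_on with
    | empty =>
      intro a
      rw [h.c_empty]
      ext u
      exact ⟨fun hu => ⟨u, hu, fun _ _ => rfl⟩,
        fun ⟨z, hz, hu⟩ => (funext fun i => hu i (Set.notMem_empty i) : u = z) ▸ hz⟩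
    | @insert i Γ _ _ ih =>
      intro a
      rw [h.c_insert]
      ext u
      constructor
      · intro hu
        obtain ⟨z, hz⟩ := hwit u i _ hu
        change update u i z ∈ f (c Γ a) at hz
        rw [ih] at hz
        obtain ⟨w, hw, huw⟩ := hz
        refine ⟨w, hw, fun j hj => ?_⟩
        rw [Set.mem_insert_iff, not_or] at hj
        rw [← huw j hj.2, update_of_ne hj.1]
      · rintro ⟨w, hw, huw⟩
        have hmem : update u i (w i) ∈ f (c Γ a) := by
          rw [ih]
          refine ⟨w, hw, fun j hj => ?_⟩
          by_cases hji : j = i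
          · subst hji; simp
          · rw [update_of_ne hji]
            exact huw j (by simp [hji, hj])
        refine hL.cyl _ _ i (fun j hj => ?_) _ (hN u) _ (hN (update u i (w i))) _ hmem
        simp [hj]
  refine ⟨U, f, ⟨fun a b => ?_, fun a => ?_, hcyl'⟩, fun σ a => ?_, ?_⟩
  · ext u
    exact hL.sup _ _ (hN u) a b
  · ext u
    exact hL.compl _ _ (hN u) a
  · ext u
    change a ∈ pull s σ (N u) ↔ a ∈ N (u ∘ σ)
    rw [hpull]
  · have hu : (fun _ => u₀) ∈ f (c Set.univ x) := by
      obtain ⟨σ, v, -, hF⟩ := hN fun _ => u₀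
      change c Set.univ x ∈ N _
      rw [hF]
      change v ∈ R (s σ (c Set.univ x))
      rw [h.s_cyl σ id Set.univ x (fun i hi => absurd (Set.mem_univ i) hi), h.s_id, hR.cyl]
      exact ⟨v₀, hv₀, fun i hi => absurd (Set.mem_univ i) hi⟩
    rw [hcyl'] at hu
    obtain ⟨z, hz, -⟩ := hu
    exact ⟨z, hz⟩

lemma PolyAxioms.repPoly (hn : 3 ≤ n) (h : PolyAxioms c s) (hc : RepDf c) : RepPoly c s := by
  choose U f hf hfs hfx using fun x : {x : A // x ≠ ⊥} => exists_hom hn h hc x.2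
  refine ⟨{x : A // x ≠ ⊥}, U, fun a k => f k a, fun x y hxy => ?_,
    fun x y => funext fun k => (hf k).sup x y, fun x => funext fun k => (hf k).compl x,
    fun Γ x k => (hf k).cyl Γ x, fun σ x k => hfs k σ x⟩
  by_contra hne
  let k : {x : A // x ≠ ⊥} := ⟨symmDiff x y, fun hb => hne (symmDiff_eq_bot.1 hb)⟩
  obtain ⟨v, hv⟩ := hfx k
  have hk : f k x = f k y := congrFun hxy k
  simp only [k, symmDiff, sdiff_eq, (hf _).sup, (hf _).inf, (hf _).compl] at hv hk
  simp only [hk, Set.inter_compl_self, Set.union_self] at hv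
  exact hv

end Main

/-- Theorem (main1-thm): for finite `n ≥ 3`, a polyadic-type algebra is representable
iff its diagonal-free cylindric reduct is representable and the finitely many
polyadic substitution axioms (1)–(4) hold. -/
theorem stmt0 {n : ℕ} (hn : 3 ≤ n) {A : Type} [BooleanAlgebra A]
    (c : Set (Fin n) → A → A) (s : (Fin n → Fin n) → A → A) :
    RepPoly c s ↔
      (RepDf c ∧
       (∀ (σ : Fin n → Fin n) (x y : A), s σ (x ⊔ y) = s σ x ⊔ s σ y) ∧
       (∀ (σ : Fin n → Fin n) (x : A), s σ xᶜ = (s σ x)ᶜ) ∧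
       (∀ (σ τ : Fin n → Fin n) (x : A), s (σ ∘ τ) x = s σ (s τ x)) ∧
       (∀ x : A, s id x = x) ∧
       (∀ (σ τ : Fin n → Fin n) (Γ : Set (Fin n)) (x : A),
          (∀ i ∉ Γ, σ i = τ i) → s σ (c Γ x) = s τ (c Γ x)) ∧
       (∀ (σ : Fin n → Fin n) (Γ : Set (Fin n)) (x : A),
          Set.InjOn σ (σ ⁻¹' Γ) → c Γ (s σ x) = s σ (c (σ ⁻¹' Γ) x))) := by
  constructor
  · intro hr
    refine ⟨hr.repDf, ?_⟩
    obtain ⟨ι, U, f, hinj, hsup, hcompl, hcyl, hsub⟩ := hr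
    refine ⟨fun σ x y => hinj ?_, fun σ x => hinj ?_, fun σ τ x => hinj ?_, fun x => hinj ?_,
      fun σ τ Γ x hστ => hinj ?_, fun σ Γ x hσ => hinj ?_⟩ <;> funext k
    · rw [hsub, hsup, hsup, Pi.sup_apply, Pi.sup_apply, hsub, hsub]
      rfl
    · rw [hsub, hcompl, hcompl, Pi.compl_apply, Pi.compl_apply, hsub]
      rfl
    · rw [hsub, hsub, hsub]
      rfl
    · rw [hsub]
      rfl
    · rw [hsub, hsub, hcyl]
      exact subG_cylG_congr hστ _
    · rw [hsub, hcyl, hcyl, hsub]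
      exact cylG_subG hσ _
  · rintro ⟨hc, h1, h2, h3, h4, h5, h6⟩
    exact (hc.polyAxioms h1 h2 h3 h4 h5 h6).repPoly hn hc
end

section
/- Let n ≥ 3 be a finite natural number and let 𝔄 = ⟨A, +, −, c_i, s_ij, p_ij⟩_{i,j<n} be a csp-algebra satisfying the FPA_n axioms. Then 𝔄 is isomorphic to a subalgebra of a direct product of full csp-set algebras if and only if its permutation-free reduct ⟨A, +, −, c_i, s_ij⟩_{i,j<n} is isomorphic to a subalgebra of a direct product of full cs-set algebras. -/
/-- Cylindrification: `C_i(R) = {s : s(i/u) ∈ R for some u}`. -/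
def cyl {n : ℕ} {U : Type} (i : Fin n) (R : Set (Fin n → U)) : Set (Fin n → U) :=
  {s | ∃ u : U, Function.update s i u ∈ R}

/-- Substitution: `S_ij(R) = {s : s(i/s(j)) ∈ R}`. -/
def subst {n : ℕ} {U : Type} (i j : Fin n) (R : Set (Fin n → U)) : Set (Fin n → U) :=
  {s | Function.update s i (s j) ∈ R}

/-- Transposition: `P_ij(R) = {s : s(i/s(j))(j/s(i)) ∈ R}`. -/
def transp {n : ℕ} {U : Type} (i j : Fin n) (R : Set (Fin n → U)) : Set (Fin n → U) :=
  {s | Function.update (Function.update s i (s j)) j (s i) ∈ R}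

/-- `⟨A, +, −, c_i, s_ij, p_ij⟩` is isomorphic to a subalgebra of a direct product of
full csp-set algebras. -/
def RepCsp {n : ℕ} {A : Type} [BooleanAlgebra A]
    (c : Fin n → A → A) (s : Fin n → Fin n → A → A) (p : Fin n → Fin n → A → A) : Prop :=
  ∃ (ι : Type) (U : ι → Type) (f : A → ∀ k, Set (Fin n → U k)),
    Function.Injective f ∧
    (∀ x y : A, f (x ⊔ y) = f x ⊔ f y) ∧
    (∀ x : A, f xᶜ = (f x)ᶜ) ∧
    (∀ (i : Fin n) (x : A) (k : ι), f (c i x) k = cyl i (f x k)) ∧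
    (∀ (i j : Fin n) (x : A) (k : ι), f (s i j x) k = subst i j (f x k)) ∧
    (∀ (i j : Fin n) (x : A) (k : ι), f (p i j x) k = transp i j (f x k))

/-- `⟨A, +, −, c_i, s_ij⟩` is isomorphic to a subalgebra of a direct product of
full cs-set algebras. -/
def RepCs {n : ℕ} {A : Type} [BooleanAlgebra A]
    (c : Fin n → A → A) (s : Fin n → Fin n → A → A) : Prop :=
  ∃ (ι : Type) (U : ι → Type) (f : A → ∀ k, Set (Fin n → U k)),
    Function.Injective f ∧
    (∀ x y : A, f (x ⊔ y) = f x ⊔ f y) ∧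
    (∀ x : A, f xᶜ = (f x)ᶜ) ∧
    (∀ (i : Fin n) (x : A) (k : ι), f (c i x) k = cyl i (f x k)) ∧
    (∀ (i j : Fin n) (x : A) (k : ι), f (s i j x) k = subst i j (f x k))

/-- A family indexed by pairs which satisfies the defining relations of the transpositions. -/
structure IsTranspositionFamily {α G : Type*} [Group G] (q : α → α → G) : Prop where
  self : ∀ i, q i i = 1
  symm : ∀ i j, q i j = q j i
  mul_self : ∀ i j, q i j * q i j = 1
  conj : ∀ i j k, i ≠ j → i ≠ k → j ≠ k → q i j * q i k = q j k * q i j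

namespace IsTranspositionFamily

open Equiv

variable {α G : Type*} [Group G]

lemma swap [DecidableEq α] : IsTranspositionFamily (swap : α → α → Perm α) where
  self := swap_self
  symm := swap_comm
  mul_self := swap_mul_self
  conj i j k hij hik hjk := by
    ext x
    simp only [Perm.mul_apply, swap_apply_def]
    split_ifs <;> simp_all

lemma prodMk {H : Type*} [Group H] {q : α → α → G} {r : α → α → H}
    (hq : IsTranspositionFamily q) (hr : IsTranspositionFamily r) :
    IsTranspositionFamily fun i j ↦ (q i j, r i j) where
  self i := by simp [hq.self, hr.self]
  symm i j := by simp [hq.symm i j, hr.symm i j]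
  mul_self i j := by simp [hq.mul_self, hr.mul_self]
  conj i j k hij hik hjk := by simp [hq.conj i j k hij hik hjk, hr.conj i j k hij hik hjk]

/-- The subgroup generated by the transpositions of elements of `S`. -/
def closureOn (q : α → α → G) (S : Finset α) : Subgroup G :=
  Subgroup.closure {g | ∃ i ∈ S, ∃ j ∈ S, q i j = g}

lemma mem_closureOn {q : α → α → G} {S : Finset α} {i j : α} (hi : i ∈ S) (hj : j ∈ S) :
    q i j ∈ closureOn q S := Subgroup.subset_closure ⟨i, hi, j, hj, rfl⟩

lemma apply_eq_self_of_mem_closureOn [DecidableEq α] {q : α → α → G} {S : Finset α}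
    {a : α} (ha : a ∉ S) {g : Perm α × G}
    (hg : g ∈ closureOn (fun i j ↦ (Equiv.swap i j, q i j)) S) : g.1 a = a := by
  induction hg using Subgroup.closure_induction with
  | mem x hx =>
    obtain ⟨i, hi, j, hj, rfl⟩ := hx
    exact swap_apply_of_ne_of_ne (fun e ↦ ha (e ▸ hi)) (fun e ↦ ha (e ▸ hj))
  | one => rfl
  | mul x y _ _ hx hy => simp [hx, hy]
  | inv x _ hx => simpa using (Perm.inv_eq_iff_eq.2 hx.symm)

variable {q : α → α → G} (hq : IsTranspositionFamily q)
include hq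

lemma inv (i j : α) : (q i j)⁻¹ = q i j := inv_eq_of_mul_eq_one_right (hq.mul_self i j)

lemma conj' (i j k : α) (hij : i ≠ j) (hik : i ≠ k) (hjk : j ≠ k) :
    q i j * q i k * q i j = q j k := by
  rw [hq.conj i j k hij hik hjk, mul_assoc, hq.mul_self, mul_one]

lemma commute {a b c d : α} (hab : a ≠ b) (hac : a ≠ c) (had : a ≠ d) (hbc : b ≠ c)
    (hbd : b ≠ d) (hcd : c ≠ d) : q a b * q c d = q c d * q a b := by
  have h₁ : q a b * q b c = q a c * q a b := by
    simpa only [hq.symm b a] using hq.conj b a c hab.symm hbc hac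
  have h₂ : q a b * q b d = q a d * q a b := by
    simpa only [hq.symm b a] using hq.conj b a d hab.symm hbd had
  calc q a b * q c d = q a b * q b c * q b d * q b c := by
        rw [← hq.conj' b c d hbc hbd hcd]; simp only [mul_assoc]
    _ = q a c * (q a b * q b d) * q b c := by rw [h₁]; simp only [mul_assoc]
    _ = q a c * q a d * (q a b * q b c) := by rw [h₂]; simp only [mul_assoc]
    _ = q a c * q a d * q a c * q a b := by rw [h₁]; simp only [mul_assoc]
    _ = q c d * q a b := by rw [hq.conj' a c d hac had hcd]

variable [DecidableEq α]

lemma mul_eq_mul_swap {a b c d : α} (hac : a ≠ c) (had : a ≠ d) :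
    q a b * q c d = q c d * q a (Equiv.swap c d b) := by
  rcases eq_or_ne c d with rfl | hcd
  · simp [hq.self]
  rcases eq_or_ne b a with rfl | hba
  · simp [hq.self, swap_apply_of_ne_of_ne hac had]
  rcases eq_or_ne b c with rfl | hbc
  · rw [swap_apply_left, hq.symm a b, hq.symm b d, hq.symm a d,
      hq.conj d b a hcd.symm had.symm hba]
  rcases eq_or_ne b d with rfl | hbd
  · rw [swap_apply_right, hq.symm a b, hq.symm a c, hq.conj c b a hcd hac.symm hba]
  rw [swap_apply_of_ne_of_ne hbc hbd, hq.commute hba.symm hac had hbc hbd hcd]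

lemma exists_eq_mul_of_mem_closureOn_insert {S : Finset α} {a : α} (ha : a ∉ S) {g : G}
    (hg : g ∈ closureOn q (insert a S)) : ∃ h ∈ closureOn q S, ∃ b, g = h * q a b := by
  have key : ∀ g : G, (∃ h ∈ closureOn q S, ∃ b, b ∈ insert a S ∧ g = h * q a b) →
      ∀ c ∈ insert a S, ∀ d ∈ insert a S,
      ∃ h ∈ closureOn q S, ∃ b, b ∈ insert a S ∧ g * q c d = h * q a b := by
    rintro _ ⟨h, hh, b, hb, rfl⟩
    have step : ∀ d ∈ S, ∃ h' ∈ closureOn q S, ∃ b', b' ∈ insert a S ∧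
        h * q a b * q a d = h' * q a b' := by
      intro d hd
      have had : a ≠ d := fun e ↦ ha (e ▸ hd)
      rcases eq_or_ne b a with rfl | hba
      · exact ⟨h, hh, d, Finset.mem_insert_of_mem hd, by simp [hq.self]⟩
      rcases eq_or_ne b d with rfl | hbd
      · exact ⟨h, hh, a, Finset.mem_insert_self _ _, by
          rw [mul_assoc, hq.mul_self, hq.self]⟩
      · exact ⟨h * q b d, mul_mem hh (mem_closureOn (Finset.mem_of_mem_insert_of_ne hb hba) hd),
          b, hb, by rw [mul_assoc, hq.conj a b d hba.symm had hbd, mul_assoc]⟩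
    intro c hc d hd
    rcases Finset.mem_insert.1 hc with rfl | hcS
    · rcases Finset.mem_insert.1 hd with rfl | hdS
      · exact ⟨h, hh, b, hb, by simp [hq.self]⟩
      · exact step d hdS
    rcases Finset.mem_insert.1 hd with rfl | hdS
    · rw [hq.symm c d]
      exact step c hcS
    have hac : a ≠ c := fun e ↦ ha (e ▸ hcS)
    have had : a ≠ d := fun e ↦ ha (e ▸ hdS)
    refine ⟨h * q c d, mul_mem hh (mem_closureOn hcS hdS), Equiv.swap c d b, ?_, ?_⟩
    · rw [swap_apply_def]
      split_ifs <;> assumption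
    · rw [mul_assoc, hq.mul_eq_mul_swap hac had, mul_assoc]
  suffices H : ∃ h ∈ closureOn q S, ∃ b, b ∈ insert a S ∧ g = h * q a b by
    obtain ⟨h, hh, b, -, hb⟩ := H
    exact ⟨h, hh, b, hb⟩
  induction hg using Subgroup.closure_induction_right with
  | one => exact ⟨1, one_mem _, a, Finset.mem_insert_self _ _, by simp [hq.self]⟩
  | mul_right x _ y hy ih =>
    obtain ⟨c, hc, d, hd, rfl⟩ := hy
    exact key x ih c hc d hd
  | mul_inv_cancel x _ y hy ih =>
    obtain ⟨c, hc, d, hd, rfl⟩ := hy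
    rw [hq.inv]
    exact key x ih c hc d hd

lemma eq_one_of_mem_closureOn (S : Finset α) {g : G}
    (hg : ((1 : Perm α), g) ∈ closureOn (fun i j ↦ (Equiv.swap i j, q i j)) S) : g = 1 := by
  have hE : IsTranspositionFamily (fun i j ↦ ((Equiv.swap i j : Perm α), q i j)) := swap.prodMk hq
  induction S using Finset.induction_on with
  | empty => simpa [closureOn] using hg
  | insert a S ha ih =>
    obtain ⟨h, hh, b, hb⟩ := hE.exists_eq_mul_of_mem_closureOn_insert ha hg
    have hfix := apply_eq_self_of_mem_closureOn ha hh
    have hba : h.1 b = a := by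
      have := congrArg (fun x : Perm α × G ↦ x.1 a) hb
      simpa using this.symm
    obtain rfl : b = a := h.1.injective (hba.trans hfix.symm)
    rw [hE.self, mul_one] at hb
    exact ih (hb ▸ hh)

/-- The transpositions with their defining relations present the symmetric group. -/
theorem exists_monoidHom [Fintype α] : ∃ φ : Perm α →* G, ∀ i j, φ (Equiv.swap i j) = q i j := by
  let H := closureOn (fun i j ↦ ((Equiv.swap i j : Perm α), q i j)) Finset.univ
  let π : H →* Perm α := (MonoidHom.fst _ _).comp H.subtype
  have hmem : ∀ i j, ((Equiv.swap i j : Perm α), q i j) ∈ H := fun i j ↦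
    mem_closureOn (Finset.mem_univ i) (Finset.mem_univ j)
  have hπ : Function.Bijective π := by
    constructor
    · rw [injective_iff_map_eq_one]
      rintro ⟨⟨σ, g⟩, hg⟩ hσ
      obtain rfl : σ = 1 := hσ
      obtain rfl := hq.eq_one_of_mem_closureOn Finset.univ hg
      rfl
    · intro σ
      induction σ using Perm.swap_induction_on with
      | one => exact ⟨1, map_one π⟩
      | swap_mul σ i j _ ih =>
        obtain ⟨x, rfl⟩ := ih
        exact ⟨⟨_, hmem i j⟩ * x, map_mul π _ _⟩
  let e := MulEquiv.ofBijective π hπ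
  refine ⟨((MonoidHom.snd _ _).comp H.subtype).comp e.symm.toMonoidHom, fun i j ↦ ?_⟩
  have : e.symm (Equiv.swap i j) = ⟨_, hmem i j⟩ := by
    rw [MulEquiv.symm_apply_eq]
    rfl
  simp [this]

end IsTranspositionFamily

/-- Every base has a cover carrying an equivariant choice of an enumeration of each injective
sequence, such that each single coordinate can be lifted to make the enumeration trivial. -/
lemma exists_equivariant_cover {n : ℕ} (hn : 0 < n) (U : Type) :
    ∃ (V : Type) (π : V → U) (h : (Fin n → V) → Equiv.Perm (Fin n)), Function.Surjective π ∧
      (∀ s : Fin n → V, Function.Injective s → ∀ τ : Equiv.Perm (Fin n),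
        h (s ∘ τ) = τ⁻¹ * h s) ∧
      ∀ (s : Fin n → V) (i : Fin n) (u : U), ∃ v, π v = u ∧ h (Function.update s i v) = 1 := by
  classical
  let T := U × Equiv.Perm (Fin n)
  let _ : LinearOrder T := linearOrderOfSTO WellOrderingRel
  let V := ℕ ×ₗ T
  let col : V → Equiv.Perm (Fin n) := fun v ↦ (ofLex v).2.2
  let last : Fin n := ⟨n - 1, by omega⟩
  have hlast : ∀ a : Fin n, a ≤ last := fun a ↦ by
    rw [Fin.le_def]; simp only [last]; omega
  let h : (Fin n → V) → Equiv.Perm (Fin n) := fun s ↦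
    if Function.Injective s then Tuple.sort s * col (s (Tuple.sort s last)) else 1
  refine ⟨V, fun v ↦ (ofLex v).2.1, h, fun u ↦ ⟨toLex (0, u, 1), rfl⟩, ?_, ?_⟩
  · intro s hs τ
    have hsτ : Function.Injective (s ∘ τ) := hs.comp τ.injective
    have hsort : (s ∘ τ) ∘ Tuple.sort (s ∘ τ) = s ∘ Tuple.sort s :=
      Tuple.comp_perm_comp_sort_eq_comp_sort
    have hmul : Tuple.sort (s ∘ τ) = τ⁻¹ * Tuple.sort s := by
      ext1 a
      apply hsτ
      simpa using congrFun hsort a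
    have hcol : (s ∘ τ) (Tuple.sort (s ∘ τ) last) = s (Tuple.sort s last) := congrFun hsort last
    simp only [h, if_pos hs, if_pos hsτ, hcol]
    rw [hmul, mul_assoc]
  · intro s i u
    obtain ⟨N, hN⟩ : ∃ N : ℕ, ∀ j, (ofLex (s j)).1 < N := by
      refine ⟨Finset.univ.sup (fun j ↦ (ofLex (s j)).1) + 1, fun j ↦ Nat.lt_succ_of_le ?_⟩
      exact Finset.le_sup (f := fun j ↦ (ofLex (s j)).1) (Finset.mem_univ j)
    let v : Equiv.Perm (Fin n) → V := fun ρ ↦ toLex (N, u, ρ)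
    have hv : ∀ ρ j, s j < v ρ := fun ρ j ↦ Prod.Lex.lt_iff.2 (Or.inl (hN j))
    let σ := Tuple.sort (Function.update s i (v 1))
    have hσ : Monotone (Function.update s i (v 1) ∘ σ) := Tuple.monotone_sort _
    refine ⟨v σ⁻¹, rfl, ?_⟩
    by_cases hinj : Function.Injective (Function.update s i (v σ⁻¹))
    swap
    · simp only [h, if_neg hinj]
    have hmono : Monotone (Function.update s i (v σ⁻¹) ∘ σ) := by
      intro a b hab
      have h₁ := hσ hab
      simp only [Function.comp_apply, Function.update_apply] at h₁ ⊢
      split_ifs at h₁ ⊢ with ha hb hb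
      · exact le_rfl
      · exact absurd h₁ (hv _ _).not_ge
      · exact (hv _ _).le
      · exact h₁
    have hsort : Tuple.sort (Function.update s i (v σ⁻¹)) = σ := by
      ext1 a
      apply hinj
      exact congrFun (Tuple.comp_sort_eq_comp_iff_monotone.2 hmono).symm a
    have hlasti : σ last = i := by
      by_contra hne
      have h₁ := hσ (hlast (σ.symm i))
      simp only [Function.comp_apply, Equiv.apply_symm_apply, Function.update_self,
        Function.update_of_ne hne] at h₁
      exact absurd h₁ (hv _ _).not_ge
    simp only [h, if_pos hinj, hsort, hlasti, Function.update_self]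
    exact mul_inv_cancel σ

section SetOperations

variable {n : ℕ} {U : Type}

lemma update_update_eq_comp_swap (i j : Fin n) (t : Fin n → U) :
    Function.update (Function.update t i (t j)) j (t i) = t ∘ Equiv.swap i j := by
  rw [Equiv.swap_comm, Equiv.comp_swap_eq_update]

lemma mem_transp {i j : Fin n} {R : Set (Fin n → U)} {t : Fin n → U} :
    t ∈ transp i j R ↔ t ∘ Equiv.swap i j ∈ R := by
  rw [← update_update_eq_comp_swap]; rfl

lemma mem_iff_of_cyl_eq {k : Fin n} {R : Set (Fin n → U)} (hR : cyl k R = R) {t t' : Fin n → U}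
    (h : ∀ m, m ≠ k → t m = t' m) : t ∈ R ↔ t' ∈ R := by
  rw [← hR]
  have : ∀ u, Function.update t k u = Function.update t' k u := fun u ↦ by
    ext m
    by_cases hm : m = k
    · subst hm; simp
    · simp [hm, h m hm]
  simp only [cyl, Set.mem_ofPred_eq, this]

lemma transp_cyl (i j k : Fin n) (R : Set (Fin n → U)) :
    transp i j (cyl k R) = cyl (Equiv.swap i j k) (transp i j R) := by
  ext t
  simp only [mem_transp, cyl, Set.mem_ofPred_eq]
  refine exists_congr fun u ↦ ?_
  rw [Function.update_comp_eq_of_injective _ (Equiv.injective _)]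

lemma transp_subst (i j k l : Fin n) (R : Set (Fin n → U)) :
    transp i j (subst (Equiv.swap i j k) (Equiv.swap i j l) R) = subst k l (transp i j R) := by
  ext t
  simp only [mem_transp, subst, Set.mem_ofPred_eq, Function.comp_apply, Equiv.swap_apply_self]
  rw [Function.update_comp_equiv, Equiv.symm_swap]

lemma cyl_cyl (i : Fin n) (R : Set (Fin n → U)) : cyl i (cyl i R) = cyl i R := by
  ext t
  simp only [cyl, Set.mem_ofPred_eq, Function.update_idem]
  exact ⟨fun ⟨_, h⟩ ↦ h, fun ⟨u, h⟩ ↦ ⟨u, u, h⟩⟩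

end SetOperations

/-- The axioms of finitary polyadic algebras on which the argument relies. -/
structure IsFPA {n : ℕ} {A : Type} [BooleanAlgebra A]
    (c : Fin n → A → A) (s : Fin n → Fin n → A → A) (p : Fin n → Fin n → A → A) : Prop where
  s_self : ∀ i x, s i i x = x
  p_self : ∀ i x, p i i x = x
  p_symm : ∀ i j x, p i j x = p j i x
  le_c : ∀ i x, x ≤ c i x
  c_sup : ∀ i x y, c i (x ⊔ y) = c i x ⊔ c i y
  s_c_self : ∀ i j x, s i j (c i x) = c i x
  c_s_self : ∀ i j x, i ≠ j → c i (s i j x) = s i j x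
  s_c : ∀ i j k x, k ≠ i → k ≠ j → s i j (c k x) = c k (s i j x)
  s_sup : ∀ i j x y, s i j (x ⊔ y) = s i j x ⊔ s i j y
  s_compl : ∀ i j x, s i j xᶜ = (s i j x)ᶜ
  p_sup : ∀ i j x y, p i j (x ⊔ y) = p i j x ⊔ p i j y
  p_compl : ∀ i j x, p i j xᶜ = (p i j x)ᶜ
  p_p : ∀ i j x, p i j (p i j x) = x
  p_conj : ∀ i j k x, i ≠ j → i ≠ k → j ≠ k → p i j (p i k x) = p j k (p i j x)
  p_s : ∀ i j x, p i j (s j i x) = s i j x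

/-- `f` embeds `⟨A, +, −, c_i, s_ij⟩` into a direct product of full cs-set algebras. -/
structure IsCsEmbedding {n : ℕ} {A : Type} [BooleanAlgebra A]
    (c : Fin n → A → A) (s : Fin n → Fin n → A → A) {ι : Type} {U : ι → Type}
    (f : A → ∀ κ, Set (Fin n → U κ)) : Prop where
  injective : Function.Injective f
  map_sup : ∀ x y, f (x ⊔ y) = f x ⊔ f y
  map_compl : ∀ x, f xᶜ = (f x)ᶜ
  map_c : ∀ i x κ, f (c i x) κ = cyl i (f x κ)
  map_s : ∀ i j x κ, f (s i j x) κ = subst i j (f x κ)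

section BooleanMaps

variable {A B : Type*} [BooleanAlgebra A] [BooleanAlgebra B] {g : A → B}

lemma monotone_of_map_sup (hsup : ∀ x y, g (x ⊔ y) = g x ⊔ g y) : Monotone g := fun x y h ↦ by
  rw [← sup_eq_right] at h ⊢
  rw [← hsup, h]

lemma map_inf_of_map_sup_of_map_compl (hsup : ∀ x y, g (x ⊔ y) = g x ⊔ g y)
    (hcompl : ∀ x, g xᶜ = (g x)ᶜ) (x y : A) : g (x ⊓ y) = g x ⊓ g y := by
  rw [← compl_compl (x ⊓ y), compl_inf, hcompl, hsup, hcompl, hcompl, compl_sup, compl_compl,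
    compl_compl]

lemma map_bot_of_map_sup_of_map_compl (hsup : ∀ x y, g (x ⊔ y) = g x ⊔ g y)
    (hcompl : ∀ x, g xᶜ = (g x)ᶜ) : g ⊥ = ⊥ := by
  have h := map_inf_of_map_sup_of_map_compl hsup hcompl ⊥ ⊥ᶜ
  rwa [hcompl, inf_compl_self, inf_compl_self] at h

end BooleanMaps

namespace IsFPA

variable {n : ℕ} {A : Type} [BooleanAlgebra A]
  {c : Fin n → A → A} {s : Fin n → Fin n → A → A} {p : Fin n → Fin n → A → A}
  (hA : IsFPA c s p)
include hA

lemma p_c_self (i j : Fin n) (x : A) : p i j (c j x) = s i j (c j x) := by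
  rw [← hA.p_s i j, hA.s_c_self]

lemma c_c_self (hn : 3 ≤ n) (i : Fin n) (x : A) : c i (c i x) = c i x := by
  have : Nontrivial (Fin n) := Fin.nontrivial_iff_two_le.2 (by omega)
  obtain ⟨j, hj⟩ := exists_ne i
  rw [← hA.s_c_self i j x, hA.c_s_self i j _ hj.symm]

/-- On elements that do not depend on `k`, a transposition is a composition of substitutions. -/
lemma p_eq_s_s_s {i j k : Fin n} (hij : i ≠ j) (hik : i ≠ k) (hjk : j ≠ k) {z : A}
    (hz : c k z = z) : p i j z = s k i (s i j (s j k z)) := by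
  have h₁ : p j k z = s j k z := by simpa only [hz] using hA.p_c_self j k z
  have h₂ : p i j (s j k z) = s i j (s j k z) := by
    simpa only [hA.c_s_self j k z hjk] using hA.p_c_self i j (s j k z)
  have h₃ : p k i (s i j (s j k z)) = s k i (s i j (s j k z)) := by
    simpa only [hA.c_s_self i j _ hij] using hA.p_c_self k i (s i j (s j k z))
  rw [← h₃, ← h₂, ← h₁, hA.p_symm i j (p j k z), hA.p_conj j i k z hij.symm hjk hik,
    hA.p_symm k i, hA.p_p, hA.p_symm]

lemma exists_monoidHom : ∃ φ : Equiv.Perm (Fin n) →* Equiv.Perm A,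
    ∀ i j x, φ (Equiv.swap i j) x = p i j x := by
  have hq : IsTranspositionFamily fun i j ↦ Function.Involutive.toPerm (p i j) (hA.p_p i j) :=
    { self := fun i ↦ Equiv.ext (hA.p_self i)
      symm := fun i j ↦ Equiv.ext (hA.p_symm i j)
      mul_self := fun i j ↦ Equiv.ext (hA.p_p i j)
      conj := fun i j k hij hik hjk ↦ Equiv.ext fun x ↦ hA.p_conj i j k x hij hik hjk }
  obtain ⟨φ, hφ⟩ := hq.exists_monoidHom
  exact ⟨φ, fun i j x ↦ by rw [hφ]; rfl⟩

lemma perm_sup {φ : Equiv.Perm (Fin n) →* Equiv.Perm A}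
    (hφ : ∀ i j x, φ (Equiv.swap i j) x = p i j x) (σ : Equiv.Perm (Fin n)) (x y : A) :
    φ σ (x ⊔ y) = φ σ x ⊔ φ σ y := by
  induction σ using Equiv.Perm.swap_induction_on with
  | one => simp
  | swap_mul σ i j _ ih => simp only [map_mul, Equiv.Perm.mul_apply, hφ, ih, hA.p_sup]

lemma perm_compl {φ : Equiv.Perm (Fin n) →* Equiv.Perm A}
    (hφ : ∀ i j x, φ (Equiv.swap i j) x = p i j x) (σ : Equiv.Perm (Fin n)) (x : A) :
    φ σ xᶜ = (φ σ x)ᶜ := by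
  induction σ using Equiv.Perm.swap_induction_on with
  | one => simp
  | swap_mul σ i j _ ih => simp only [map_mul, Equiv.Perm.mul_apply, hφ, ih, hA.p_compl]

variable {ι : Type} {U : ι → Type} {f : A → ∀ κ, Set (Fin n → U κ)}
  (hf : IsCsEmbedding c s f)
include hf

lemma map_p_of_c_eq {k : Fin n} {z : A} (hz : c k z = z) (i j : Fin n) (κ : ι) :
    f (p i j z) κ = transp i j (f z κ) := by
  have hR : cyl k (f z κ) = f z κ := by rw [← hf.map_c, hz]
  rcases eq_or_ne i j with rfl | hij
  · ext t
    simp [hA.p_self, mem_transp]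
  rcases eq_or_ne k i with rfl | hki
  · have : p k j z = s j k z := by
      rw [hA.p_symm, ← hz, hA.p_c_self]
    ext t
    rw [this, hf.map_s, mem_transp]
    refine mem_iff_of_cyl_eq hR fun m hm ↦ ?_
    by_cases hmj : m = j
    · subst hmj; simp
    · simp [hmj, Equiv.swap_apply_of_ne_of_ne hm hmj]
  rcases eq_or_ne k j with rfl | hkj
  · have : p i k z = s i k z := by
      rw [← hz, hA.p_c_self]
    ext t
    rw [this, hf.map_s, mem_transp]
    refine mem_iff_of_cyl_eq hR fun m hm ↦ ?_
    by_cases hmi : m = i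
    · subst hmi; simp
    · simp [hmi, Equiv.swap_apply_of_ne_of_ne hmi hm]
  rw [hA.p_eq_s_s_s hij hki.symm hkj.symm hz, hf.map_s, hf.map_s, hf.map_s]
  ext t
  rw [mem_transp]
  refine mem_iff_of_cyl_eq hR fun m hm ↦ ?_
  simp only [Function.update_apply, Function.comp_apply, Equiv.swap_apply_def]
  split_ifs <;> simp_all

lemma c_p_c (hn : 3 ≤ n) (i j k : Fin n) (x : A) :
    c (Equiv.swap i j k) (p i j (c k x)) = p i j (c k x) := by
  apply hf.injective
  funext κ
  rw [hf.map_c, hA.map_p_of_c_eq hf (hA.c_c_self hn k x), hf.map_c, transp_cyl, cyl_cyl]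

lemma p_c (hn : 3 ≤ n) (i j k : Fin n) (x : A) :
    p i j (c k x) = c (Equiv.swap i j k) (p i j x) := by
  have hle : ∀ k x, c (Equiv.swap i j k) (p i j x) ≤ p i j (c k x) := fun k x ↦ by
    rw [← hA.c_p_c hf hn]
    exact monotone_of_map_sup (hA.c_sup _) (monotone_of_map_sup (hA.p_sup i j) (hA.le_c k x))
  refine le_antisymm ?_ (hle k x)
  have h := monotone_of_map_sup (hA.p_sup i j) (hle (Equiv.swap i j k) (p i j x))
  simpa only [Equiv.swap_apply_self, hA.p_p] using h

lemma map_p_s {k l : Fin n} (hkl : k ≠ l) (i j : Fin n) (x : A) (κ : ι) :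
    f (p i j (s (Equiv.swap i j k) (Equiv.swap i j l) x)) κ =
      subst k l (transp i j (f x κ)) := by
  have hkl' : Equiv.swap i j k ≠ Equiv.swap i j l := (Equiv.injective _).ne hkl
  rw [hA.map_p_of_c_eq hf (hA.c_s_self _ _ x hkl'), hf.map_s, transp_subst]

lemma s_p_of_c_eq {k l m : Fin n} (hkl : k ≠ l) (i j : Fin n) {z : A} (hz : c m z = z) :
    s k l (p i j z) = p i j (s (Equiv.swap i j k) (Equiv.swap i j l) z) := by
  apply hf.injective
  funext κ
  rw [hA.map_p_s hf hkl, hf.map_s, hA.map_p_of_c_eq hf hz]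

/-- A transposition conjugates substitutions as expected. -/
lemma s_p (hn : 3 ≤ n) {k l : Fin n} (hkl : k ≠ l) (i j : Fin n) (x : A) :
    s k l (p i j x) = p i j (s (Equiv.swap i j k) (Equiv.swap i j l) x) := by
  have hpbot : ∀ i j, p i j ⊥ = ⊥ := fun i j ↦
    map_bot_of_map_sup_of_map_compl (hA.p_sup i j) (hA.p_compl i j)
  have hcbot : ∀ i, c i ⊥ = ⊥ := fun i ↦ by
    have hfbot : f ⊥ = ⊥ := map_bot_of_map_sup_of_map_compl hf.map_sup hf.map_compl
    apply hf.injective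
    funext κ
    rw [hf.map_c, hfbot]
    ext t
    simp [cyl]
  set σ := Equiv.swap i j with hσ
  have hkl' : σ k ≠ σ l := σ.injective.ne hkl
  obtain ⟨m, hmk, hml⟩ : ∃ m, m ≠ k ∧ m ≠ l := by
    obtain ⟨m, hm⟩ := Finset.exists_mem_notMem_of_card_lt_card (s := {k, l}) (t := Finset.univ)
      (Finset.card_le_two.trans_lt (by rw [Finset.card_univ, Fintype.card_fin]; omega))
    exact ⟨m, by simpa using hm⟩
  have hzero : ∀ z, s (σ k) (σ l) z = ⊥ → s k l (p i j z) = ⊥ := fun z hz ↦ by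
    have h : c m (s k l (p i j z)) = ⊥ := by
      have hp : c m (p i j z) = p i j (c (σ m) z) := by
        rw [hA.p_c hf hn, ← hσ, hσ, Equiv.swap_apply_self]
      rw [← hA.s_c k l m _ hmk hml, hp, hA.s_p_of_c_eq hf hkl i j (hA.c_c_self hn _ z), ← hσ,
        hA.s_c _ _ _ _ (σ.injective.ne hmk) (σ.injective.ne hml), hz, hcbot, hpbot]
    exact le_bot_iff.1 (h ▸ hA.le_c m _)
  have hle : ∀ x, s k l (p i j x) ≤ p i j (s (σ k) (σ l) x) := fun x ↦ by
    have hidem : s (σ k) (σ l) (s (σ k) (σ l) x) = s (σ k) (σ l) x := by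
      rw [← hA.c_s_self _ _ x hkl', hA.s_c_self]
    have hz := hzero (x ⊓ (s (σ k) (σ l) x)ᶜ) (by
      rw [map_inf_of_map_sup_of_map_compl (hA.s_sup _ _) (hA.s_compl _ _), hA.s_compl, hidem,
        inf_compl_self])
    rw [map_inf_of_map_sup_of_map_compl (hA.p_sup _ _) (hA.p_compl _ _),
      map_inf_of_map_sup_of_map_compl (hA.s_sup _ _) (hA.s_compl _ _), hA.p_compl, hA.s_compl,
      hA.s_p_of_c_eq hf hkl i j (hA.c_s_self _ _ x hkl'), ← hσ, hidem] at hz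
    exact disjoint_compl_right_iff.1 (disjoint_iff.2 hz)
  refine le_antisymm (hle x) ?_
  have h := hle xᶜ
  rw [hA.p_compl, hA.s_compl, hA.s_compl, hA.p_compl] at h
  exact compl_le_compl_iff_le.1 h

lemma mem_map_p_iff_of_not_injective (hn : 3 ≤ n) {κ : ι} {t : Fin n → U κ}
    (ht : ¬ Function.Injective t) (i j : Fin n) (x : A) :
    t ∈ f (p i j x) κ ↔ t ∘ Equiv.swap i j ∈ f x κ := by
  obtain ⟨k, l, htkl, hkl⟩ := Function.not_injective_iff.1 ht
  have hupd : Function.update t k (t l) = t := by rw [← htkl, Function.update_eq_self]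
  have hmem : ∀ R : Set (Fin n → U κ), t ∈ subst k l R ↔ t ∈ R := fun R ↦ by
    simp only [subst, Set.mem_ofPred_eq, hupd]
  rw [← mem_transp, ← hmem (f _ κ), ← hmem (transp _ _ _), ← hA.map_p_s hf hkl,
    ← hA.s_p hf hn hkl, hf.map_s]

variable {φ : Equiv.Perm (Fin n) →* Equiv.Perm A} (hφ : ∀ i j x, φ (Equiv.swap i j) x = p i j x)
include hφ

lemma mem_map_perm_iff_of_not_injective (hn : 3 ≤ n) {κ : ι} (σ : Equiv.Perm (Fin n))
    {t : Fin n → U κ} (ht : ¬ Function.Injective t) (x : A) :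
    t ∈ f (φ σ x) κ ↔ t ∘ σ ∈ f x κ := by
  induction σ using Equiv.Perm.swap_induction_on generalizing t with
  | one => simp
  | swap_mul σ i j _ ih =>
    have ht' : ¬ Function.Injective (t ∘ Equiv.swap i j) := by
      rwa [Equiv.injective_comp]
    rw [map_mul, Equiv.Perm.mul_apply, hφ, hA.mem_map_p_iff_of_not_injective hf hn ht, ih ht']
    rfl

lemma exists_c_perm_eq (hn : 3 ≤ n) {m : Fin n} {z : A} (hz : c m z = z)
    (σ : Equiv.Perm (Fin n)) : ∃ k, c k (φ σ z) = φ σ z := by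
  induction σ using Equiv.Perm.swap_induction_on with
  | one => exact ⟨m, by simpa using hz⟩
  | swap_mul σ i j _ ih =>
    obtain ⟨k, hk⟩ := ih
    refine ⟨Equiv.swap i j k, ?_⟩
    rw [map_mul, Equiv.Perm.mul_apply, hφ, ← hA.p_c hf hn, hk]

lemma mem_map_perm_iff_of_c_eq (hn : 3 ≤ n) {m : Fin n} {z : A} (hz : c m z = z) {κ : ι}
    (σ : Equiv.Perm (Fin n)) (t : Fin n → U κ) : t ∈ f (φ σ z) κ ↔ t ∘ σ ∈ f z κ := by
  induction σ using Equiv.Perm.swap_induction_on generalizing t with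
  | one => simp
  | swap_mul σ i j _ ih =>
    obtain ⟨k, hk⟩ := hA.exists_c_perm_eq hf hφ hn hz σ
    rw [map_mul, Equiv.Perm.mul_apply, hφ, hA.map_p_of_c_eq hf hk, mem_transp, ih]
    rfl

end IsFPA

theorem IsFPA.repCsp_of_isCsEmbedding {n : ℕ} (hn : 3 ≤ n) {A : Type} [BooleanAlgebra A]
    {c : Fin n → A → A} {s : Fin n → Fin n → A → A} {p : Fin n → Fin n → A → A}
    (hA : IsFPA c s p) {ι : Type} {U : ι → Type} {f : A → ∀ κ, Set (Fin n → U κ)}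
    (hf : IsCsEmbedding c s f) : RepCsp c s p := by
  obtain ⟨φ, hφ⟩ := hA.exists_monoidHom
  choose V π h hsurj hequiv hlift using fun κ ↦
    exists_equivariant_cover (n := n) (by omega) (U κ)
  let g : A → ∀ κ, Set (Fin n → V κ) := fun x κ ↦
    {t | π κ ∘ t ∘ h κ t ∈ f (φ (h κ t)⁻¹ x) κ}
  have hcancel : ∀ κ (t : Fin n → V κ) (σ : Equiv.Perm (Fin n)),
      (π κ ∘ t ∘ σ) ∘ (σ⁻¹ : Equiv.Perm (Fin n)) = π κ ∘ t := fun κ t σ ↦ by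
    ext a
    simp
  have hfixed : ∀ {m z}, c m z = z → ∀ {κ t}, t ∈ g z κ ↔ π κ ∘ t ∈ f z κ := by
    intro m z hz κ t
    rw [← hcancel κ t (h κ t), ← hA.mem_map_perm_iff_of_c_eq hf hφ hn hz]
    rfl
  have hnotinj : ∀ {x κ t}, ¬ Function.Injective t → (t ∈ g x κ ↔ π κ ∘ t ∈ f x κ) := by
    intro x κ t ht
    have ht' : ¬ Function.Injective (π κ ∘ t ∘ h κ t) := fun hinj ↦
      ht ((Equiv.injective_comp _ _).1 hinj.of_comp)
    rw [← hcancel κ t (h κ t), ← hA.mem_map_perm_iff_of_not_injective hf hφ hn _ ht']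
    rfl
  have hone : ∀ {x κ t}, h κ t = 1 → (t ∈ g x κ ↔ π κ ∘ t ∈ f x κ) := by
    intro x κ t ht
    simp only [g, Set.mem_ofPred_eq, ht, inv_one, map_one]
    rfl
  have hgsup : ∀ x y, g (x ⊔ y) = g x ⊔ g y := fun x y ↦ by
    funext κ
    ext t
    simp only [g, hA.perm_sup hφ, hf.map_sup]
    rfl
  have hgc : ∀ i x κ, g (c i x) κ = cyl i (g x κ) := fun i x κ ↦ by
    ext t
    have hcc := hA.c_c_self hn i x
    constructor
    · rw [hfixed hcc, hf.map_c]
      rintro ⟨u, hu⟩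
      obtain ⟨v, rfl, hv⟩ := hlift κ t i u
      refine ⟨v, (hone hv).2 ?_⟩
      rwa [Function.comp_update]
    · rintro ⟨v, hv⟩
      have hle : g x ≤ g (c i x) := monotone_of_map_sup hgsup (hA.le_c i x)
      have hv' := (hfixed hcc).1 (hle κ hv)
      rw [Function.comp_update] at hv'
      rw [hfixed hcc]
      refine (mem_iff_of_cyl_eq (k := i) ?_ fun m hm ↦ ?_).1 hv'
      · rw [← hf.map_c, hcc]
      · simp [hm]
  refine ⟨ι, V, g, ?_, hgsup, ?_, hgc, ?_, ?_⟩
  · intro x y hxy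
    apply hf.injective
    funext κ
    ext t
    obtain ⟨t', rfl⟩ : ∃ t', π κ ∘ t' = t := (hsurj κ).comp_left t
    obtain ⟨v, hv, hv1⟩ := hlift κ t' ⟨0, by omega⟩ (π κ (t' ⟨0, by omega⟩))
    have heq : π κ ∘ Function.update t' ⟨0, by omega⟩ v = π κ ∘ t' := by
      rw [Function.comp_update, hv]
      exact Function.update_eq_self _ _
    rw [← heq, ← hone hv1, ← hone hv1, hxy]
  · intro x
    funext κ
    ext t
    simp only [g, hA.perm_compl hφ, hf.map_compl]
    rfl
  · intro i j x κ
    rcases eq_or_ne i j with rfl | hij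
    · ext t
      simp [hA.s_self, subst]
    ext t
    have hni : ¬ Function.Injective (Function.update t i (t j)) := fun hinj ↦
      hij (hinj (by simp [Function.update_of_ne hij.symm]))
    rw [hfixed (hA.c_s_self i j x hij), hf.map_s]
    refine Iff.trans ?_ (hnotinj hni).symm
    rw [Function.comp_update]
    rfl
  · intro i j x κ
    ext t
    rw [mem_transp]
    by_cases ht : Function.Injective t
    · simp only [g, Set.mem_ofPred_eq, hequiv κ t ht, Equiv.swap_inv]
      have h₁ : (t ∘ Equiv.swap i j) ∘ (Equiv.swap i j * h κ t : Equiv.Perm (Fin n)) =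
          t ∘ h κ t := by
        ext a
        simp
      rw [h₁, mul_inv_rev, Equiv.swap_inv, map_mul, Equiv.Perm.mul_apply, hφ]
    · have ht' : ¬ Function.Injective (t ∘ Equiv.swap i j) := by
        rwa [Equiv.injective_comp]
      have ht'' : ¬ Function.Injective (π κ ∘ t) := fun hinj ↦ ht hinj.of_comp
      rw [hnotinj ht, hnotinj ht', hA.mem_map_p_iff_of_not_injective hf hn ht'']
      rfl

/-- Theorem: an `FPA_n` is representable iff its permutation-free reduct is
representable. -/
theorem stmt5 {n : ℕ} (hn : 3 ≤ n) {A : Type} [BooleanAlgebra A]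
    (c : Fin n → A → A) (s : Fin n → Fin n → A → A) (p : Fin n → Fin n → A → A)
    (hsii : ∀ (i : Fin n) (x : A), s i i x = x)
    (hpii : ∀ (i : Fin n) (x : A), p i i x = x)
    (hpsymm : ∀ (i j : Fin n) (x : A), p i j x = p j i x)
    (hF1 : ∀ (i : Fin n) (x : A), x ≤ c i x)
    (hF2 : ∀ (i : Fin n) (x y : A), c i (x ⊔ y) = c i x ⊔ c i y)
    (hF3 : ∀ (i j : Fin n) (x : A), s i j (c i x) = c i x)
    (hF4 : ∀ (i j : Fin n) (x : A), i ≠ j → c i (s i j x) = s i j x)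
    (hF5 : ∀ (i j k : Fin n) (x : A), k ≠ i → k ≠ j → s i j (c k x) = c k (s i j x))
    (hF6ssup : ∀ (i j : Fin n) (x y : A), s i j (x ⊔ y) = s i j x ⊔ s i j y)
    (hF6scompl : ∀ (i j : Fin n) (x : A), s i j xᶜ = (s i j x)ᶜ)
    (hF6psup : ∀ (i j : Fin n) (x y : A), p i j (x ⊔ y) = p i j x ⊔ p i j y)
    (hF6pcompl : ∀ (i j : Fin n) (x : A), p i j xᶜ = (p i j x)ᶜ)
    (hF7 : ∀ (i j : Fin n) (x : A), p i j (p i j x) = x)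
    (hF8 : ∀ (i j k : Fin n) (x : A), i ≠ j → i ≠ k → j ≠ k →
      p i j (p i k x) = p j k (p i j x))
    (hF9 : ∀ (i j : Fin n) (x : A), p i j (s j i x) = s i j x) :
    RepCsp c s p ↔ RepCs c s := by
  constructor
  · rintro ⟨ι, U, f, hinj, hsup, hcompl, hc, hs, -⟩
    exact ⟨ι, U, f, hinj, hsup, hcompl, hc, hs⟩
  · rintro ⟨ι, U, f, hinj, hsup, hcompl, hc, hs⟩
    exact IsFPA.repCsp_of_isCsEmbedding hn
      ⟨hsii, hpii, hpsymm, hF1, hF2, hF3, hF4, hF5, hF6ssup, hF6scompl, hF6psup, hF6pcompl,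
        hF7, hF8, hF9⟩
      ⟨hinj, hsup, hcompl, hc, hs⟩
end

section
/- Let n ≥ 3 be a finite natural number and let 𝔄 be a csp-algebra of dimension n satisfying the FPA_n axioms. Then for all i, j < n and all x ∈ A: p_ij c_i x = c_j p_ij x; and for all pairwise distinct i, j, m < n and all x ∈ A: p_ij c_m x = c_m p_ij x. -/
/-- Lemma (P4)–(P5): in any `FPA_n` (`n ≥ 3`): `p_ij c_i x = c_j p_ij x` for all
`i, j`, and `p_ij c_m x = c_m p_ij x` for pairwise distinct `i, j, m`. -/
theorem stmt10 {n : ℕ} (hn : 3 ≤ n) {A : Type} [BooleanAlgebra A]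
    (c : Fin n → A → A) (s : Fin n → Fin n → A → A) (p : Fin n → Fin n → A → A)
    (hsii : ∀ (i : Fin n) (x : A), s i i x = x)
    (hpii : ∀ (i : Fin n) (x : A), p i i x = x)
    (hpsymm : ∀ (i j : Fin n) (x : A), p i j x = p j i x)
    (hF1 : ∀ (i : Fin n) (x : A), x ≤ c i x)
    (hF2 : ∀ (i : Fin n) (x y : A), c i (x ⊔ y) = c i x ⊔ c i y)
    (hF3 : ∀ (i j : Fin n) (x : A), s i j (c i x) = c i x)
    (hF4 : ∀ (i j : Fin n) (x : A), i ≠ j → c i (s i j x) = s i j x)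
    (hF5 : ∀ (i j k : Fin n) (x : A), k ≠ i → k ≠ j → s i j (c k x) = c k (s i j x))
    (hF6ssup : ∀ (i j : Fin n) (x y : A), s i j (x ⊔ y) = s i j x ⊔ s i j y)
    (hF6scompl : ∀ (i j : Fin n) (x : A), s i j xᶜ = (s i j x)ᶜ)
    (hF6psup : ∀ (i j : Fin n) (x y : A), p i j (x ⊔ y) = p i j x ⊔ p i j y)
    (hF6pcompl : ∀ (i j : Fin n) (x : A), p i j xᶜ = (p i j x)ᶜ)
    (hF7 : ∀ (i j : Fin n) (x : A), p i j (p i j x) = x)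
    (hF8 : ∀ (i j k : Fin n) (x : A), i ≠ j → i ≠ k → j ≠ k →
      p i j (p i k x) = p j k (p i j x))
    (hF9 : ∀ (i j : Fin n) (x : A), p i j (s j i x) = s i j x) :
    (∀ (i j : Fin n) (x : A), p i j (c i x) = c j (p i j x)) ∧
    (∀ (i j m : Fin n), i ≠ j → i ≠ m → j ≠ m → ∀ x : A,
      p i j (c m x) = c m (p i j x)) := by
  have p_mono (i j : Fin n) {x y : A} (h : x ≤ y) : p i j x ≤ p i j y := by
    rw [← sup_eq_right] at h ⊢
    rw [← hF6psup, h]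
  have c_mono (i : Fin n) {x y : A} (h : x ≤ y) : c i x ≤ c i y := by
    rw [← sup_eq_right] at h ⊢
    rw [← hF2, h]
  have p_c_closed (i j : Fin n) (hij : i ≠ j) (x : A) :
      c j (p i j (c i x)) = p i j (c i x) := by
    have h : p i j (c i x) = s j i (c i x) := by
      rw [← hF9 j i, hF3, hpsymm]
    rw [h, hF4 j i _ hij.symm]
  have c_p_le (i j : Fin n) (hij : i ≠ j) (x : A) : c j (p i j x) ≤ p i j (c i x) :=
    (c_mono j (p_mono i j (hF1 i x))).trans_eq (p_c_closed i j hij x)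
  have p_c (i j : Fin n) (x : A) : p i j (c i x) = c j (p i j x) := by
    obtain rfl | hij := eq_or_ne i j
    · simp only [hpii]
    · refine le_antisymm ?_ (c_p_le i j hij x)
      have h := p_mono i j (c_p_le j i hij.symm (p i j x))
      rwa [hpsymm j i, hpsymm j i, hF7, hF7] at h
  refine ⟨p_c, fun i j m hij him hjm x => ?_⟩
  -- The transposition `(i j)` moves `m` along the cycle `m → i → j → m`.
  have p_eq (y : A) : p i j y = p j m (p i j (p m i y)) := by
    rw [hpsymm m i, ← hF8 i j m _ hij him hjm, hF7]
  rw [p_eq, p_c, p_c, p_c, ← p_eq]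
end

section
/- Let n ≥ 3 be a finite natural number and let 𝔄 be a csp-algebra of dimension n satisfying the FPA_n axioms. Then for all pairwise distinct i, j, k < n and all x ∈ A: s_ij s_kj x = s_ij s_ki x. -/
/-- `f` preserves joins and complements. -/
structure PreservesSupCompl {A : Type*} [BooleanAlgebra A] (f : A → A) : Prop where
  sup : ∀ x y, f (x ⊔ y) = f x ⊔ f y
  compl : ∀ x, f xᶜ = (f x)ᶜ

namespace PreservesSupCompl

variable {A : Type*} [BooleanAlgebra A] {f g : A → A}

theorem comp (hf : PreservesSupCompl f) (hg : PreservesSupCompl g) :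
    PreservesSupCompl (fun x => f (g x)) :=
  ⟨fun x y => by rw [hg.sup, hf.sup], fun x => by rw [hg.compl, hf.compl]⟩

theorem monotone (hf : PreservesSupCompl f) : Monotone f := fun x y h => by
  rw [← sup_eq_right, ← hf.sup, sup_eq_right.2 h]

theorem inf (hf : PreservesSupCompl f) (x y : A) : f (x ⊓ y) = f x ⊓ f y := by
  rw [← compl_inj_iff, ← hf.compl, compl_inf, compl_inf, hf.sup, hf.compl, hf.compl]

theorem map_bot (hf : PreservesSupCompl f) : f ⊥ = ⊥ := by
  have h := hf.inf ⊥ ⊥ᶜ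
  rwa [hf.compl, inf_compl_eq_bot, inf_compl_eq_bot] at h

/-- If `g` is idempotent and the kernel of `f` contains the kernel of `g`, then `f ∘ g = f`. -/
theorem apply_apply_eq_of_ker_le (hf : PreservesSupCompl f) (hg : PreservesSupCompl g)
    (idem : ∀ x, g (g x) = g x) (ker : ∀ a, g a = ⊥ → f a = ⊥) (x : A) : f (g x) = f x := by
  have le : ∀ y, f y ≤ f (g y) := fun y => by
    have h := ker (y ⊓ (g y)ᶜ) (by rw [hg.inf, hg.compl, idem, inf_compl_eq_bot])
    rwa [hf.inf, hf.compl, ← disjoint_iff, disjoint_compl_right_iff] at h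
  refine le_antisymm ?_ (le x)
  have h := le xᶜ
  rwa [hg.compl, hf.compl, hf.compl, compl_le_compl_iff_le] at h

end PreservesSupCompl


/-- Lemma (FS): in any `FPA_n` (`n ≥ 3`), for pairwise distinct `i, j, k`:
`s_ij s_kj x = s_ij s_ki x`. -/
theorem stmt11 {n : ℕ} (hn : 3 ≤ n) {A : Type} [BooleanAlgebra A]
    (c : Fin n → A → A) (s : Fin n → Fin n → A → A) (p : Fin n → Fin n → A → A)
    (hsii : ∀ (i : Fin n) (x : A), s i i x = x)
    (hpii : ∀ (i : Fin n) (x : A), p i i x = x)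
    (hpsymm : ∀ (i j : Fin n) (x : A), p i j x = p j i x)
    (hF1 : ∀ (i : Fin n) (x : A), x ≤ c i x)
    (hF2 : ∀ (i : Fin n) (x y : A), c i (x ⊔ y) = c i x ⊔ c i y)
    (hF3 : ∀ (i j : Fin n) (x : A), s i j (c i x) = c i x)
    (hF4 : ∀ (i j : Fin n) (x : A), i ≠ j → c i (s i j x) = s i j x)
    (hF5 : ∀ (i j k : Fin n) (x : A), k ≠ i → k ≠ j → s i j (c k x) = c k (s i j x))
    (hF6ssup : ∀ (i j : Fin n) (x y : A), s i j (x ⊔ y) = s i j x ⊔ s i j y)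
    (hF6scompl : ∀ (i j : Fin n) (x : A), s i j xᶜ = (s i j x)ᶜ)
    (hF6psup : ∀ (i j : Fin n) (x y : A), p i j (x ⊔ y) = p i j x ⊔ p i j y)
    (hF6pcompl : ∀ (i j : Fin n) (x : A), p i j xᶜ = (p i j x)ᶜ)
    (hF7 : ∀ (i j : Fin n) (x : A), p i j (p i j x) = x)
    (hF8 : ∀ (i j k : Fin n) (x : A), i ≠ j → i ≠ k → j ≠ k →
      p i j (p i k x) = p j k (p i j x))
    (hF9 : ∀ (i j : Fin n) (x : A), p i j (s j i x) = s i j x) :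
    ∀ i j k : Fin n, i ≠ j → i ≠ k → j ≠ k → ∀ x : A,
      s i j (s k j x) = s i j (s k i x) := by
  have hs : ∀ i j, PreservesSupCompl (s i j) := fun i j => ⟨hF6ssup i j, hF6scompl i j⟩
  have hp : ∀ i j, PreservesSupCompl (p i j) := fun i j => ⟨hF6psup i j, hF6pcompl i j⟩
  have s_s_same : ∀ i j k x, i ≠ k → s i j (s i k x) = s i k x := fun i j k x h => by
    rw [← hF4 i k x h, hF3]
  have s_s_swap : ∀ i j x, i ≠ j → s i j (s j i x) = s i j x := fun i j x h => by
    rw [← hF9 i j (s j i x), s_s_same j i i x h.symm, hF9]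
  have c_bot : ∀ i j, i ≠ j → c i ⊥ = ⊥ := fun i j h => by
    rw [← (hs i j).map_bot, hF4 i j _ h]
  -- The kernel of `s i j` is closed under `c k`.
  have ker_c : ∀ i j k a, k ≠ i → k ≠ j → s i j a = ⊥ → s i j (c k a) = ⊥ :=
    fun i j k a hi hj h => by rw [hF5 i j k a hi hj, h, c_bot k i hi]
  have absorb_swap : ∀ (f : A → A) i j, i ≠ j → (∀ x, f (s i j x) = f x) →
      ∀ x, f (s j i x) = f x := fun f i j h hf x => by
    rw [← hf (s j i x), s_s_swap i j x h, hf]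
  have absorb_p : ∀ (f : A → A) i j k, PreservesSupCompl f → i ≠ j → i ≠ k → j ≠ k →
      (∀ x, f (s i j x) = f x) → (∀ x, f (s k j x) = f x) → ∀ x, f (p i j x) = f x := by
    intro f i j k hf hij hik hjk h₁ h₂ x
    have h₁' := absorb_swap f i j hij h₁
    have h₂' := absorb_swap f k j hjk.symm h₂
    have on_c : ∀ y, f (p i j (c i y)) = f (c i y) := fun y => by
      rw [← hF3 i j y, hpsymm, hF9, h₁', hF3]
    have h := (hf.comp (hp i j)).apply_apply_eq_of_ker_le (hs j k)
      (fun y => s_s_same j k k y hjk) (fun a ha => by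
        refine le_bot_iff.1 (((hf.comp (hp i j)).monotone (hF1 i a)).trans (le_of_eq ?_))
        rw [on_c, ← h₂', ker_c j k i a hij hik ha, hf.map_bot]) x
    rw [← h, ← s_s_same j i k x hjk, hF9, h₁, h₂']
  intro i j k hij hik hjk x
  let f : A → A := fun y => s i j (s k j y)
  have hf : PreservesSupCompl f := (hs i j).comp (hs k j)
  have f_skj : ∀ y, f (s k j y) = f y := fun y =>
    congrArg (s i j) (s_s_same k j j y hjk.symm)
  have f_sij : ∀ y, f (s i j y) = f y :=
    hf.apply_apply_eq_of_ker_le (hs i j) (fun y => s_s_same i j j y hij) fun a ha => by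
      refine le_bot_iff.1 ((hf.monotone (hF1 k a)).trans (le_of_eq ?_))
      change s i j (s k j (c k a)) = ⊥
      rw [hF3, ker_c i j k a hik.symm hjk.symm ha]
  have f_pij := absorb_p f i j k hf hij hik hjk f_sij f_skj
  have f_pkj := absorb_p f k j i hf hjk.symm hik.symm hij.symm f_skj f_sij
  have f_pik : ∀ y, f (p i k y) = f y := fun y => by
    rw [← hF7 j i y, ← hF8 j i k (p j i y) hij.symm hjk hik, hpsymm j i, f_pij, hpsymm j k,
      f_pkj, hpsymm j i (p j i y), f_pij, hpsymm j i, f_pij]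
  have f_ski_ci : ∀ y, f (s k i (c i y)) = f (c i y) := fun y => by
    rw [← hF9 k i, hF3, hpsymm, f_pik]
  have f_ski_sij : ∀ y, f (s k i (s i j y)) = f (s k i y) :=
    (hf.comp (hs k i)).apply_apply_eq_of_ker_le (hs i j) (fun y => s_s_same i j j y hij)
      fun a ha => by
        refine le_bot_iff.1 (((hf.comp (hs k i)).monotone (hF1 k a)).trans (le_of_eq ?_))
        rw [hF3, ← f_sij, ker_c i j k a hik.symm hjk.symm ha, hf.map_bot]
  have f_ski : f (s k i x) = f x := by
    rw [← f_ski_sij, ← hF4 i j x hij, f_ski_ci, hF4 i j x hij, f_sij]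
  change f x = _
  rw [← f_ski]
  exact congrArg (s i j) (s_s_same k j i x hik.symm)
end

section
/- Let n ≥ 3 be a finite natural number, let 𝔄 be a csp-algebra of dimension n satisfying the FPA_n axioms, and suppose d_kl ∈ A (k, l < n) are elements satisfying s_kl d_kl = 1 and x · d_kl ≤ s_kl x for all x ∈ A and all k, l < n. Then for all i, j, k, l < n: p_ij(d_kl) = d_{τ(k) τ(l)}, where τ = [i,j] is the transposition of Fin n exchanging i and j. -/
/-- The part of the `FPA_n` axioms, together with the two laws of the elements `d_kl`, from which
the action of the `p_ij` on the `d_kl` is determined. -/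
structure DiagonalFPA {ι A : Type*} [BooleanAlgebra A] (c : ι → A → A) (s p : ι → ι → A → A)
    (d : ι → ι → A) : Prop where
  le_c : ∀ i x, x ≤ c i x
  s_c : ∀ i j x, s i j (c i x) = c i x
  c_s : ∀ i j x, i ≠ j → c i (s i j x) = s i j x
  s_c_comm : ∀ i j k x, k ≠ i → k ≠ j → s i j (c k x) = c k (s i j x)
  s_sup : ∀ i j x y, s i j (x ⊔ y) = s i j x ⊔ s i j y
  s_compl : ∀ i j x, s i j xᶜ = (s i j x)ᶜ
  p_sup : ∀ i j x y, p i j (x ⊔ y) = p i j x ⊔ p i j y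
  p_compl : ∀ i j x, p i j xᶜ = (p i j x)ᶜ
  p_symm : ∀ i j x, p i j x = p j i x
  p_p : ∀ i j x, p i j (p i j x) = x
  p_conj : ∀ i j k x, i ≠ j → i ≠ k → j ≠ k → p i j (p i k x) = p j k (p i j x)
  p_s : ∀ i j x, p i j (s j i x) = s i j x
  s_d : ∀ k l, s k l (d k l) = ⊤
  inf_d_le : ∀ k l x, x ⊓ d k l ≤ s k l x

namespace DiagonalFPA

variable {ι A : Type*} [BooleanAlgebra A] {c : ι → A → A} {s p : ι → ι → A → A}
  {d : ι → ι → A} {i j k l : ι} {x : A}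

theorem s_inf (h : DiagonalFPA c s p d) (i j : ι) (x y : A) :
    s i j (x ⊓ y) = s i j x ⊓ s i j y := by
  rw [← compl_inj_iff, ← h.s_compl, compl_inf, compl_inf, h.s_sup, h.s_compl, h.s_compl]

theorem p_inf (h : DiagonalFPA c s p d) (i j : ι) (x y : A) :
    p i j (x ⊓ y) = p i j x ⊓ p i j y := by
  rw [← compl_inj_iff, ← h.p_compl, compl_inf, compl_inf, h.p_sup, h.p_compl, h.p_compl]

theorem s_mono (h : DiagonalFPA c s p d) (i j : ι) : Monotone (s i j) := fun x y hxy => by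
  rw [← sup_eq_right.2 hxy, h.s_sup]
  exact le_sup_left

theorem p_mono (h : DiagonalFPA c s p d) (i j : ι) : Monotone (p i j) := fun x y hxy => by
  rw [← sup_eq_right.2 hxy, h.p_sup]
  exact le_sup_left

theorem p_top (h : DiagonalFPA c s p d) (i j : ι) : p i j ⊤ = ⊤ := by
  rw [← sup_compl_eq_top (x := (⊤ : A)), h.p_sup, h.p_compl, sup_compl_eq_top, sup_compl_eq_top]

theorem s_top (h : DiagonalFPA c s p d) (i j : ι) : s i j ⊤ = ⊤ := by
  rw [← sup_compl_eq_top (x := (⊤ : A)), h.s_sup, h.s_compl, sup_compl_eq_top, sup_compl_eq_top]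

theorem s_bot (h : DiagonalFPA c s p d) (i j : ι) : s i j ⊥ = ⊥ := by
  rw [← compl_top, h.s_compl, h.s_top]

theorem s_s (h : DiagonalFPA c s p d) (hij : i ≠ j) (k : ι) (x : A) :
    s i k (s i j x) = s i j x := by
  rw [← h.c_s i j x hij, h.s_c]

theorem s_inf_d (h : DiagonalFPA c s p d) (i j : ι) (x : A) :
    s i j x ⊓ d i j = x ⊓ d i j := by
  apply le_antisymm _ (le_inf (h.inf_d_le i j x) inf_le_right)
  have hx := h.inf_d_le i j xᶜ
  rw [h.s_compl, le_compl_iff_disjoint_right, disjoint_iff] at hx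
  refine le_inf ?_ inf_le_right
  rw [← disjoint_compl_right_iff, disjoint_iff]
  rw [← hx]
  ac_rfl

theorem d_le (h : DiagonalFPA c s p d) (hx : s i j x = ⊤) : d i j ≤ x := by
  have := h.s_inf_d i j x
  rw [hx, top_inf_eq] at this
  exact this ▸ inf_le_left

theorem d_self (h : DiagonalFPA c s p d) (hs : s i i (d i i) = d i i) : d i i = ⊤ :=
  hs ▸ h.s_d i i

theorem d_symm (h : DiagonalFPA c s p d) (i j : ι) : d i j = d j i := by
  have key : ∀ k l, d k l ≤ d l k := fun k l => h.d_le (by rw [← h.p_s, h.s_d, h.p_top])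
  exact le_antisymm (key i j) (key j i)

theorem s_d_of_ne (h : DiagonalFPA c s p d) (hki : k ≠ i) (hkj : k ≠ j) (l : ι) :
    s k l (d i j) = d i j := by
  have hbot : c k ⊥ = (⊥ : A) := by
    simpa [h.s_bot] using h.c_s k i ⊥ hki
  have hle : d i j ≤ (c k (d i j)ᶜ)ᶜ := h.d_le <| by
    rw [h.s_compl, h.s_c_comm i j k _ hki hkj, h.s_compl, h.s_d, compl_top, hbot, compl_bot]
  have hc : c k (d i j)ᶜ = (d i j)ᶜ :=
    le_antisymm (le_compl_comm.1 hle) (h.le_c k _)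
  have hs := h.s_c k l (d i j)ᶜ
  rwa [hc, h.s_compl, compl_inj_iff] at hs

theorem p_s_s (h : DiagonalFPA c s p d) (hij : i ≠ j) (hik : i ≠ k) (hjk : j ≠ k) (x : A) :
    p i j (s k j (s j i x)) = s k i (s i j x) := by
  rw [← h.p_s k j, h.s_s hij.symm, h.p_symm i j, h.p_symm k j, h.p_conj j i k _ hij.symm hjk hik,
    h.p_symm j i, h.p_s, ← h.s_s hij k x, h.p_symm i k, h.p_s, h.s_s hij]

theorem d_trans (h : DiagonalFPA c s p d) (hij : i ≠ j) (hik : i ≠ k) (hjk : j ≠ k) :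
    d i j ⊓ d j k ≤ d i k := by
  have hp : p i j (d j k) ⊓ d i j = d j k ⊓ d i j := by
    rw [← h.s_d_of_ne hij hik j, h.p_symm, h.p_s, h.s_d_of_ne hij hik j, h.d_symm i j, h.s_inf_d]
  have hs : ∀ x, p i j (s j i x) ⊓ p i j (d j k) = s k i (s i j x) ⊓ p i j (d j k) := fun x => by
    rw [← h.p_inf, h.d_symm j k, ← h.s_inf_d, h.p_inf, h.p_s_s hij hik hjk]
  have hd : ∀ x, s k i (s i j x) ⊓ d i j = s k i x ⊓ d i j := fun x => by
    rw [← h.s_d_of_ne hik.symm hjk.symm i, ← h.s_inf, h.s_inf_d, h.s_inf]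
  have key : d i k ⊓ (d i j ⊓ d j k) = d i j ⊓ d j k :=
    calc d i k ⊓ (d i j ⊓ d j k)
        = (d i k ⊓ d i j) ⊓ d j k := by ac_rfl
      _ = s i j (d i k) ⊓ (d j k ⊓ d i j) := by rw [← h.s_inf_d i j]; ac_rfl
      _ = (p i j (s j i (d i k)) ⊓ p i j (d j k)) ⊓ d i j := by rw [← hp, h.p_s]; ac_rfl
      _ = s k i (s i j (d i k)) ⊓ (p i j (d j k) ⊓ d i j) := by rw [hs]; ac_rfl
      _ = (s k i (s i j (d i k)) ⊓ d i j) ⊓ d j k := by rw [hp]; ac_rfl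
      _ = d i j ⊓ d j k := by rw [hd, h.d_symm i k, h.s_d, top_inf_eq]
  exact key ▸ inf_le_left

theorem p_d_same (h : DiagonalFPA c s p d) (hij : i ≠ j) (hik : i ≠ k) (hjk : j ≠ k) :
    p i j (d i j) = d i j := by
  have hle : d i j ≤ p i j (d i j) := by
    have h₁ : d i j ≤ p i j (s k j (d i k)) := by
      rw [← h.s_d_of_ne hij.symm hjk i, h.p_s_s hij hik hjk, ← h.s_d_of_ne hik.symm hjk.symm i]
      calc s k i (d i j) = s k i (s i j (d i k) ⊓ d i j) := by
            rw [h.s_inf_d, h.s_inf, h.d_symm i k, h.s_d, top_inf_eq]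
        _ ≤ s k i (s i j (d i k)) := h.s_mono k i inf_le_left
    have h₂ : p i j (s k j (d k j)) = ⊤ := by rw [h.s_d, h.p_top]
    calc d i j ≤ p i j (s k j (d i k)) ⊓ p i j (s k j (d k j)) := le_inf h₁ (h₂ ▸ le_top)
      _ = p i j (s k j (d i k ⊓ d k j)) := by rw [h.s_inf, h.p_inf]
      _ ≤ p i j (s k j (d i j)) := h.p_mono i j (h.s_mono k j (h.d_trans hik hij hjk.symm))
      _ = p i j (d i j) := by rw [h.s_d_of_ne hik.symm hjk.symm]
  refine le_antisymm ?_ hle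
  simpa only [h.p_p] using h.p_mono i j hle

theorem p_inf_d (h : DiagonalFPA c s p d) (hij : i ≠ j) (hik : i ≠ k) (hjk : j ≠ k) (x : A) :
    p i j x ⊓ d i j = x ⊓ d i j := by
  calc p i j x ⊓ d i j = p i j (s j i x ⊓ d j i) := by
        rw [h.s_inf_d, h.p_inf, h.d_symm j i, h.p_d_same hij hik hjk]
    _ = x ⊓ d i j := by
        rw [h.p_inf, h.p_s, h.d_symm j i, h.p_d_same hij hik hjk, h.s_inf_d]

theorem p_d_left (h : DiagonalFPA c s p d) (hij : i ≠ j) (hik : i ≠ k) (hjk : j ≠ k) :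
    p i j (d i k) = d j k := by
  have key : ∀ {i j}, i ≠ j → i ≠ k → j ≠ k → d j k ≤ p i j (d i k) := by
    intro i j hij hik hjk
    have hle : d i j ⊓ d j k ≤ p i j (d i k) := by
      refine le_trans (le_inf (h.d_trans hij hik hjk) inf_le_left) ?_
      rw [← h.p_inf_d hij hik hjk]
      exact inf_le_left
    have hfix : s i j (p i j (d i k)) = p i j (d i k) := by
      rw [← h.s_d_of_ne hij.symm hjk i, h.p_s, h.s_s hij]
    calc d j k = s i j (d i j ⊓ d j k) := by
          rw [h.s_inf, h.s_d, top_inf_eq, h.s_d_of_ne hij hik]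
      _ ≤ p i j (d i k) := hfix ▸ h.s_mono i j hle
  refine le_antisymm ?_ (key hij hik hjk)
  simpa only [h.p_symm j i, h.p_p] using h.p_mono i j (key hij.symm hjk hik)

theorem p_d_of_ne (h : DiagonalFPA c s p d) (hij : i ≠ j) (hik : i ≠ k) (hil : i ≠ l)
    (hjk : j ≠ k) (hjl : j ≠ l) (hkl : k ≠ l) : p i j (d k l) = d k l := by
  rw [← h.p_d_left hik hil hkl, h.p_conj i j k _ hij hik hjk, h.p_d_left hij hil hjl,
    h.p_d_left hjk hjl hkl, h.p_d_left hik hil hkl]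

end DiagonalFPA

/-- Lemma: in any `FPA_n` (`n ≥ 3`) with quasi-diagonal elements `d_kl` satisfying
`s_kl d_kl = 1` and `x · d_kl ≤ s_kl x`, one has `p_ij d_kl = d_{τ(k)τ(l)}` where
`τ = [i,j]`. -/
theorem stmt13 {n : ℕ} (hn : 3 ≤ n) {A : Type} [BooleanAlgebra A]
    (c : Fin n → A → A) (s : Fin n → Fin n → A → A) (p : Fin n → Fin n → A → A)
    (hsii : ∀ (i : Fin n) (x : A), s i i x = x)
    (hpii : ∀ (i : Fin n) (x : A), p i i x = x)
    (hpsymm : ∀ (i j : Fin n) (x : A), p i j x = p j i x)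
    (hF1 : ∀ (i : Fin n) (x : A), x ≤ c i x)
    (hF2 : ∀ (i : Fin n) (x y : A), c i (x ⊔ y) = c i x ⊔ c i y)
    (hF3 : ∀ (i j : Fin n) (x : A), s i j (c i x) = c i x)
    (hF4 : ∀ (i j : Fin n) (x : A), i ≠ j → c i (s i j x) = s i j x)
    (hF5 : ∀ (i j k : Fin n) (x : A), k ≠ i → k ≠ j → s i j (c k x) = c k (s i j x))
    (hF6ssup : ∀ (i j : Fin n) (x y : A), s i j (x ⊔ y) = s i j x ⊔ s i j y)
    (hF6scompl : ∀ (i j : Fin n) (x : A), s i j xᶜ = (s i j x)ᶜ)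
    (hF6psup : ∀ (i j : Fin n) (x y : A), p i j (x ⊔ y) = p i j x ⊔ p i j y)
    (hF6pcompl : ∀ (i j : Fin n) (x : A), p i j xᶜ = (p i j x)ᶜ)
    (hF7 : ∀ (i j : Fin n) (x : A), p i j (p i j x) = x)
    (hF8 : ∀ (i j k : Fin n) (x : A), i ≠ j → i ≠ k → j ≠ k →
      p i j (p i k x) = p j k (p i j x))
    (hF9 : ∀ (i j : Fin n) (x : A), p i j (s j i x) = s i j x)
    (d : Fin n → Fin n → A)
    (hd1 : ∀ k l : Fin n, s k l (d k l) = ⊤)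
    (hd2 : ∀ (k l : Fin n) (x : A), x ⊓ d k l ≤ s k l x) :
    ∀ i j k l : Fin n,
      p i j (d k l) = d (Equiv.swap i j k) (Equiv.swap i j l) := by
  have h : DiagonalFPA c s p d :=
    ⟨hF1, hF3, hF4, hF5, hF6ssup, hF6scompl, hF6psup, hF6pcompl, hpsymm, hF7, hF8, hF9, hd1, hd2⟩
  intro i j k l
  rcases eq_or_ne i j with rfl | hij
  · simp [hpii]
  rcases eq_or_ne k l with rfl | hkl
  · rw [h.d_self (hsii _ _), h.d_self (hsii _ _), h.p_top]
  have same : p i j (d i j) = d i j := by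
    obtain ⟨m, hm⟩ : ∃ m, m ∉ ({i, j} : Finset (Fin n)) :=
      Finset.exists_mem_notMem_of_card_lt_card (s := {i, j}) (t := Finset.univ)
        (by rw [Finset.card_univ, Fintype.card_fin]; exact Finset.card_le_two.trans_lt hn)
        |>.imp fun _ hm => hm.2
    simp only [Finset.mem_insert, Finset.mem_singleton, not_or] at hm
    exact h.p_d_same hij (Ne.symm hm.1) (Ne.symm hm.2)
  have left : ∀ m, i ≠ m → j ≠ m → p i j (d i m) = d j m := fun _ => h.p_d_left hij
  have right : ∀ m, i ≠ m → j ≠ m → p i j (d j m) = d i m := fun _ him hjm => by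
    rw [hpsymm, h.p_d_left hij.symm hjm him]
  rcases eq_or_ne i k with rfl | hik
  · rw [Equiv.swap_apply_left]
    rcases eq_or_ne j l with rfl | hjl
    · rw [Equiv.swap_apply_right, same, h.d_symm]
    · rw [Equiv.swap_apply_of_ne_of_ne hkl.symm hjl.symm, left l hkl hjl]
  rcases eq_or_ne j k with rfl | hjk
  · rw [Equiv.swap_apply_right]
    rcases eq_or_ne i l with rfl | hil
    · rw [Equiv.swap_apply_left, h.d_symm, same]
    · rw [Equiv.swap_apply_of_ne_of_ne hil.symm hkl.symm, right l hil hkl]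
  rw [Equiv.swap_apply_of_ne_of_ne hik.symm hjk.symm]
  rcases eq_or_ne i l with rfl | hil
  · rw [Equiv.swap_apply_left, h.d_symm, left k hik hjk, h.d_symm]
  rcases eq_or_ne j l with rfl | hjl
  · rw [Equiv.swap_apply_right, h.d_symm, right k hik hjk, h.d_symm]
  rw [Equiv.swap_apply_of_ne_of_ne hil.symm hjl.symm, h.p_d_of_ne hij hik hil hjk hjl hkl]
end
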